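/- Let c be a positive integer and suppose that c = L_n − 2^x·3^y = L_{n₁} − 2^{x₁}·3^{y₁} for nonnegative integers n, n₁, x, x₁, y, y₁ with n > n₁ and n > 1500. Then n − n₁ < 4·10^12 · log n. -/

import Mathlib

/-- The Lucas sequence: L 0 = 2, L 1 = 1, L (n+2) = L (n+1) + L n. -/
def lucas : ℕ → ℤ
  | 0 => 2
  | 1 => 1
  | n + 2 => lucas (n + 1) + lucas n

/-!
Comparing `2 ^ x * 3 ^ y = lucas n - c` with `φ ^ n` shows that the linear form
`Λ = n log φ - x log 2 - y log 3` is at most `6 * exp (-0.48 * (n - n₁))` in absolute value, so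
the theorem follows from a lower bound `-log |Λ| ≪ log n`. This is obtained by Baker's method.

By Siegel's lemma there are integer combinations `P l` of Feldman polynomials, with small
coefficients and not all zero, such that the function
`F z = ∑ l, P l (z) * exp ((l₁ log 2 + l₂ log 3 + l₃ log φ) * z)`
satisfies vanishing conditions of high order at the odd integers of an interval; here the
derivatives are formed with `log φ` replaced by `(x log 2 + y log 3) / n`, to which it is very
close if `Λ` is tiny. Suppose that such conditions hold at the odd multiples of `1 / 2 ^ J`. By
the maximum principle `F` and its derivatives of at most half the order are then very small at the
odd multiples of `1 / 2 ^ (J + 1)`. The values there are, up to a factor, algebraic numbers in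
`ℚ(√2, √3, √φ)`, so that they vanish by Liouville's inequality; and as `2`, `3` and `φ` are
independent modulo squares, even the part of the sum over each class of exponents `l` modulo
`2 ^ (J + 1)` vanishes. After `25` such steps every class consists of a single exponent, and a
nonzero `P l` has more zeros than its degree.
-/

open Real Polynomial
open scoped goldenRatio

section EntireFunctions

theorem le_analyticOrderAt_sum {𝕜 E ι : Type*} [NontriviallyNormedField 𝕜] [NormedAddCommGroup E]
    [NormedSpace 𝕜 E] {s : Finset ι} {f : ι → 𝕜 → E} {r : 𝕜} {μ : ℕ∞}
    (h : ∀ i ∈ s, μ ≤ analyticOrderAt (f i) r) :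
    μ ≤ analyticOrderAt (fun z => ∑ i ∈ s, f i z) r := by
  classical
  induction s using Finset.induction_on with
  | empty => simp [analyticOrderAt_eq_top.2 (Filter.Eventually.of_forall fun _ => rfl)]
  | insert a s ha ih =>
    simp only [Finset.sum_insert ha]
    exact (le_min (h a (by simp)) (ih fun i hi => h i (by simp [hi]))).trans
      (le_analyticOrderAt_add (f := f a) (g := fun z => ∑ i ∈ s, f i z))

theorem le_analyticOrderAt_mul_right {𝕜 : Type*} [NontriviallyNormedField 𝕜] {f g : 𝕜 → 𝕜} {r : 𝕜}
    {μ : ℕ∞} (hf : AnalyticAt 𝕜 f r) (hg : AnalyticAt 𝕜 g r) (h : μ ≤ analyticOrderAt f r) :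
    μ ≤ analyticOrderAt (fun z => f z * g z) r := by
  rw [show (fun z => f z * g z) = f * g from rfl, analyticOrderAt_mul hf hg]
  exact h.trans le_self_add

theorem le_analyticOrderAt_eval_of_pow_dvd {𝕜 : Type*} [NontriviallyNormedField 𝕜] {p : 𝕜[X]}
    {r : 𝕜} {μ : ℕ} (h : (X - C r) ^ μ ∣ p) : μ ≤ analyticOrderAt (fun z => p.eval z) r := by
  obtain ⟨q, rfl⟩ := h
  rw [natCast_le_analyticOrderAt (AnalyticOnNhd.eval_polynomial _ r (Set.mem_univ r))]
  exact ⟨fun z => q.eval z, AnalyticOnNhd.eval_polynomial q r (Set.mem_univ r),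
    .of_forall fun z => by simp⟩

theorem analyticOrderAt_exp_sub_one {f : ℂ → ℂ} {r : ℂ} (hf : AnalyticAt ℂ f r) (hr : f r = 0) :
    analyticOrderAt (fun z => Complex.exp (f z) - 1) r = analyticOrderAt f r := by
  have hexp : AnalyticAt ℂ (fun w => Complex.exp w - 1) (f r) := by fun_prop
  have hone : analyticOrderAt (fun w => Complex.exp w - 1) (f r) = 1 := by
    have hd : deriv Complex.exp (0 : ℂ) ≠ 0 := by simp
    simpa [hr] using
      (Complex.differentiable_exp.analyticAt 0).analyticOrderAt_sub_eq_one_of_deriv_ne_zero hd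
  have hcomp := hexp.analyticOrderAt_comp hf
  rw [hone] at hcomp
  simpa only [hr, sub_zero, one_mul, Function.comp_def] using hcomp

theorem exists_eq_pow_mul_of_le_analyticOrderAt {f : ℂ → ℂ} (hf : Differentiable ℂ f) {r : ℂ}
    {μ : ℕ} (h : μ ≤ analyticOrderAt f r) :
    ∃ g : ℂ → ℂ, Differentiable ℂ g ∧ ∀ z, f z = (z - r) ^ μ * g z := by
  induction μ generalizing f with
  | zero => exact ⟨f, hf, fun z => by simp⟩
  | succ μ ih =>
    have hfr : f r = 0 := apply_eq_zero_of_analyticOrderAt_ne_zero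
      (ne_of_gt (lt_of_lt_of_le (by exact_mod_cast μ.succ_pos) h))
    have hdiff : Differentiable ℂ (dslope f r) := by
      rw [← differentiableOn_univ] at hf ⊢
      exact (Complex.differentiableOn_dslope Filter.univ_mem).2 hf
    have hfac : f = (fun z => z - r) * dslope f r := by
      funext z
      simpa [hfr] using (sub_smul_dslope f r z).symm
    have hord : μ ≤ analyticOrderAt (dslope f r) r := by
      rw [hfac, analyticOrderAt_mul (by fun_prop) (hdiff.analyticAt r),
        analyticOrderAt_id_sub_const_self, Nat.cast_succ, add_comm] at h
      exact (ENat.add_le_add_iff_left (by simp)).1 h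
    obtain ⟨g, hg, hfg⟩ := ih hdiff hord
    refine ⟨g, hg, fun z => ?_⟩
    rw [congrFun hfac z, Pi.mul_apply, hfg, pow_succ]
    ring

theorem exists_eq_prod_pow_mul {f : ℂ → ℂ} (hf : Differentiable ℂ f) {μ : ℕ} {s : Finset ℂ}
    (h : ∀ r ∈ s, μ ≤ analyticOrderAt f r) :
    ∃ g : ℂ → ℂ, Differentiable ℂ g ∧ ∀ z, f z = (∏ r ∈ s, (z - r)) ^ μ * g z := by
  classical
  induction s using Finset.induction_on with
  | empty => exact ⟨f, hf, fun z => by simp⟩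
  | insert a s ha ih =>
    obtain ⟨g, hg, hfg⟩ := ih fun r hr => h r (by simp [hr])
    let Q : ℂ → ℂ := fun z => (∏ r ∈ s, (z - r)) ^ μ
    have hQ : AnalyticAt ℂ Q a := by fun_prop
    have hQa : Q a ≠ 0 := pow_ne_zero _ (Finset.prod_ne_zero_iff.2 fun r hr =>
      sub_ne_zero.2 (ne_of_mem_of_not_mem hr ha).symm)
    have hord : μ ≤ analyticOrderAt g a := by
      have := h a (by simp)
      rwa [show f = Q * g from funext hfg, analyticOrderAt_mul hQ (hg.analyticAt a),
        hQ.analyticOrderAt_eq_zero.2 hQa, zero_add] at this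
    obtain ⟨k, hk, hgk⟩ := exists_eq_pow_mul_of_le_analyticOrderAt hg hord
    exact ⟨k, hk, fun z => by rw [hfg, hgk, Finset.prod_insert ha, mul_pow]; ring⟩

-- The maximum principle is applied to the quotient of `f` by its prescribed zeros.
theorem norm_le_of_le_analyticOrderAt {f : ℂ → ℂ} (hf : Differentiable ℂ f) {μ : ℕ} {s : Finset ℂ}
    (h : ∀ r ∈ s, μ ≤ analyticOrderAt f r) {R A D : ℝ} (hR : 0 < R) (hD : 0 < D)
    (hA : ∀ z, ‖z‖ = R → ‖f z‖ ≤ A) (hs : ∀ z, ‖z‖ = R → D ≤ ‖∏ r ∈ s, (z - r)‖)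
    {z : ℂ} (hz : ‖z‖ ≤ R) : ‖f z‖ ≤ ‖∏ r ∈ s, (z - r)‖ ^ μ * (A / D ^ μ) := by
  obtain ⟨g, hg, hfg⟩ := exists_eq_prod_pow_mul hf h
  have hbound : ∀ w ∈ frontier (Metric.ball (0 : ℂ) R), ‖g w‖ ≤ A / D ^ μ := by
    intro w hw
    rw [frontier_ball _ hR.ne', mem_sphere_zero_iff_norm] at hw
    rw [le_div_iff₀ (by positivity)]
    calc ‖g w‖ * D ^ μ ≤ ‖g w‖ * ‖∏ r ∈ s, (w - r)‖ ^ μ := by gcongr; exact hs w hw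
      _ = ‖f w‖ := by rw [hfg, norm_mul, norm_pow, mul_comm]
      _ ≤ A := hA w hw
  have hzR : z ∈ closure (Metric.ball (0 : ℂ) R) := by
    simpa [closure_ball _ hR.ne'] using hz
  rw [hfg, norm_mul, norm_pow]
  gcongr
  exact Complex.norm_le_of_forall_mem_frontier_norm_le Metric.isBounded_ball hg.diffContOnCl
    hbound hzR

end EntireFunctions

section ExponentialPolynomials

variable {ι : Type*} (s : Finset ι) (Q : ι → ℂ[X]) (θ : ι → ℂ)

theorem iteratedDeriv_eval {𝕜 : Type*} [NontriviallyNormedField 𝕜] (P : 𝕜[X]) (m : ℕ) (z : 𝕜) :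
    iteratedDeriv m (fun w => P.eval w) z = m.factorial * (hasseDeriv m P).eval z := by
  have hiter : ∀ w, iteratedDeriv m (fun w => P.eval w) w = (derivative^[m] P).eval w := by
    induction m with
    | zero => simp
    | succ m ih =>
      intro w
      rw [iteratedDeriv_succ, funext ih, Polynomial.deriv, Function.iterate_succ_apply']
  rw [hiter, ← congrFun (factorial_smul_hasseDeriv m) P]
  simp

theorem iteratedDeriv_eval_mul_exp (P : ℂ[X]) (a : ℂ) (m : ℕ) (z : ℂ) :
    iteratedDeriv m (fun w => P.eval w * Complex.exp (a * w)) z =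
      ∑ i ∈ Finset.range (m + 1), m.choose i * (i.factorial * (hasseDeriv i P).eval z) *
        (a ^ (m - i) * Complex.exp (a * z)) := by
  rw [show (fun w => P.eval w * Complex.exp (a * w)) =
      (fun w => P.eval w) * fun w => Complex.exp (a * w) from rfl,
    iteratedDeriv_mul P.differentiable.contDiff.contDiffAt (by fun_prop)]
  simp only [iteratedDeriv_eval, iteratedDeriv_cexp_const_mul]

-- By the Leibniz rule the derivatives of the sum are combinations of the sums in `h`.
theorem le_analyticOrderAt_sum_eval_mul_exp (a : ι → ℂ) {r : ℂ} {μ : ℕ}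
    (h : ∀ i j, i + j < μ →
      ∑ l ∈ s, (hasseDeriv i (Q l)).eval r * θ l ^ j * (a l * Complex.exp (θ l * r)) = 0) :
    μ ≤ analyticOrderAt (fun z => ∑ l ∈ s, a l * ((Q l).eval z * Complex.exp (θ l * z))) r := by
  have hdiff : ∀ l, Differentiable ℂ fun z => (Q l).eval z * Complex.exp (θ l * z) := fun l =>
    (Q l).differentiable.mul (by fun_prop)
  have hsum : Differentiable ℂ fun z => ∑ l ∈ s, a l * ((Q l).eval z * Complex.exp (θ l * z)) := by
    fun_prop
  rw [natCast_le_analyticOrderAt_iff_iteratedDeriv_eq_zero (hsum.analyticAt r)]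
  intro m hm
  rw [iteratedDeriv_fun_sum fun l _ => ((hdiff l).const_mul (a l)).contDiff.contDiffAt]
  simp_rw [iteratedDeriv_const_mul_field, iteratedDeriv_eval_mul_exp, Finset.mul_sum]
  rw [Finset.sum_comm]
  refine Finset.sum_eq_zero fun i hi => ?_
  have hi := Finset.mem_range.1 hi
  refine Eq.trans ?_ (mul_eq_zero_of_right (m.choose i * i.factorial : ℂ) (h i (m - i) (by omega)))
  rw [Finset.mul_sum]
  exact Finset.sum_congr rfl fun l _ => by ring

-- Near `r` the factor `exp (τ l * V z)` agrees with the constant `exp (τ l * r)` to order `μ`.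
theorem le_analyticOrderAt_sum_eval_mul_exp_add (τ : ι → ℂ) {V : ℂ → ℂ} (hV : Differentiable ℂ V)
    {r : ℂ} (κ : ℂ) {μ : ℕ} (hVr : μ ≤ analyticOrderAt (fun z => V z - r) r)
    (h : ∀ i j, i + j < μ → ∑ l ∈ s, (hasseDeriv i (Q l)).eval r * θ l ^ j *
      Complex.exp (r * (θ l + τ l)) = 0) :
    μ ≤ analyticOrderAt (fun z => ∑ l ∈ s, (Q l).eval z *
      Complex.exp (z * (θ l - κ) + τ l * V z)) r := by
  rcases μ.eq_zero_or_pos with rfl | hμ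
  · simp
  have hVr0 : V r - r = 0 := apply_eq_zero_of_analyticOrderAt_ne_zero
    (f := fun z => V z - r) (ne_of_gt (lt_of_lt_of_le (by exact_mod_cast hμ) hVr))
  have hconst := le_analyticOrderAt_sum_eval_mul_exp s Q θ (fun l => Complex.exp (τ l * r))
    (r := r) (μ := μ) fun i j hij => by
      rw [← h i j hij]
      refine Finset.sum_congr rfl fun l _ => ?_
      rw [← Complex.exp_add]
      ring_nf
  have hosc : ∀ l ∈ s, μ ≤ analyticOrderAt (fun z => (Complex.exp (τ l * (V z - r)) - 1) *
      (Complex.exp (τ l * r) * ((Q l).eval z * Complex.exp (θ l * z)))) r := fun l _ => by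
    have hτV : Differentiable ℂ fun z => τ l * (V z - r) := by fun_prop
    refine le_analyticOrderAt_mul_right (Differentiable.analyticAt (by fun_prop) r)
      (Differentiable.analyticAt (by fun_prop) r) ?_
    rw [analyticOrderAt_exp_sub_one (hτV.analyticAt r) (by simp [hVr0])]
    simpa only [mul_comm (τ l)] using le_analyticOrderAt_mul_right
      (Differentiable.analyticAt (by fun_prop) r) analyticAt_const hVr
  have hsum := (le_min hconst (le_analyticOrderAt_sum hosc)).trans le_analyticOrderAt_add
  refine (le_analyticOrderAt_mul_right (g := fun z => Complex.exp (-κ * z))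
    (Differentiable.analyticAt ?_ r) (Differentiable.analyticAt (by fun_prop) r) hsum).trans_eq
    (congrArg (analyticOrderAt · r) (funext fun z => ?_))
  · exact Differentiable.add (by fun_prop) (by fun_prop)
  · rw [Pi.add_apply, ← Finset.sum_add_distrib, Finset.sum_mul]
    refine Finset.sum_congr rfl fun l _ => ?_
    have hexp : Complex.exp (z * (θ l - κ) + τ l * V z) = Complex.exp (τ l * (V z - r)) *
        Complex.exp (τ l * r) * Complex.exp (θ l * z) * Complex.exp (-κ * z) := by
      simp only [← Complex.exp_add]
      ring_nf
    rw [hexp]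
    ring

end ExponentialPolynomials

section FlatInterpolation

/-- The sum of the Bernstein polynomials of degree `2 * μ - 1` and index at least `μ`: a polynomial
divisible by `X ^ μ` and congruent to `1` modulo `(1 - X) ^ μ`. -/
noncomputable def bump (R : Type*) [CommRing R] (μ : ℕ) : R[X] :=
  ∑ i ∈ Finset.Ico μ (2 * μ), bernsteinPolynomial R (2 * μ - 1) i

theorem pow_dvd_bump_comp {R : Type*} [CommRing R] {p q : R[X]} (h : p ∣ q) (μ : ℕ) :
    p ^ μ ∣ (bump R μ).comp q := by
  have hX : X ^ μ ∣ bump R μ := Finset.dvd_sum fun i hi =>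
    ((pow_dvd_pow X (Finset.mem_Ico.1 hi).1).mul_left _).mul_right _
  exact (pow_dvd_pow_of_dvd h μ).trans (by simpa using map_dvd (compRingHom q) hX)

theorem pow_dvd_bump_comp_sub_one {R : Type*} [CommRing R] {p q : R[X]} (h : p ∣ 1 - q) (μ : ℕ) :
    p ^ μ ∣ (bump R μ).comp q - 1 := by
  rcases μ.eq_zero_or_pos with rfl | hμ
  · simp
  have hsum : bump R μ - 1 = -∑ i ∈ Finset.range μ, bernsteinPolynomial R (2 * μ - 1) i := by
    rw [← bernsteinPolynomial.sum R (2 * μ - 1), bump, show 2 * μ - 1 + 1 = 2 * μ by omega,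
      ← Finset.sum_range_add_sum_Ico _ (by omega : μ ≤ 2 * μ)]
    ring
  have hX : (1 - X) ^ μ ∣ bump R μ - 1 := by
    rw [hsum, dvd_neg]
    refine Finset.dvd_sum fun i hi => (pow_dvd_pow _ ?_).mul_left _
    have := Finset.mem_range.1 hi
    omega
  exact (pow_dvd_pow_of_dvd h μ).trans (by simpa using map_dvd (compRingHom q) hX)

theorem norm_eval_bump_le {𝕜 : Type*} [NormedField 𝕜] (μ : ℕ) (w : 𝕜) :
    ‖(bump 𝕜 μ).eval w‖ ≤ (1 + 2 * ‖w‖) ^ (2 * μ) := by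
  have hterm : ∀ i, ‖(bernsteinPolynomial 𝕜 (2 * μ - 1) i).eval w‖ ≤
      ‖w‖ ^ i * ‖1 - w‖ ^ (2 * μ - 1 - i) * (2 * μ - 1).choose i := fun i => by
    have := Nat.norm_cast_le (α := 𝕜) ((2 * μ - 1).choose i)
    rw [norm_one, mul_one] at this
    simp only [bernsteinPolynomial, eval_mul, eval_natCast, eval_pow, eval_X, eval_sub, eval_one,
      norm_mul, norm_pow]
    calc _ ≤ ((2 * μ - 1).choose i : ℝ) * ‖w‖ ^ i * ‖1 - w‖ ^ (2 * μ - 1 - i) := by gcongr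
      _ = _ := by ring
  have hsub : ‖1 - w‖ ≤ 1 + ‖w‖ := by simpa using norm_sub_le 1 w
  rw [bump, eval_finsetSum]
  calc _ ≤ ∑ i ∈ Finset.Ico μ (2 * μ),
          ‖w‖ ^ i * ‖1 - w‖ ^ (2 * μ - 1 - i) * (2 * μ - 1).choose i :=
        (norm_sum_le _ _).trans (Finset.sum_le_sum fun i _ => hterm i)
    _ ≤ ∑ i ∈ Finset.range (2 * μ - 1 + 1),
          ‖w‖ ^ i * ‖1 - w‖ ^ (2 * μ - 1 - i) * (2 * μ - 1).choose i := by
        refine Finset.sum_le_sum_of_subset_of_nonneg (fun i hi => ?_) fun i _ _ => by positivity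
        simp only [Finset.mem_Ico, Finset.mem_range] at hi ⊢
        omega
    _ = (‖w‖ + ‖1 - w‖) ^ (2 * μ - 1) := (add_pow _ _ _).symm
    _ ≤ (1 + 2 * ‖w‖) ^ (2 * μ - 1) := pow_le_pow_left₀ (by positivity) (by linarith) _
    _ ≤ _ := pow_le_pow_right₀ (by linarith [norm_nonneg w]) (by omega)

/-- A polynomial which at each node `x i`, `i ∈ s`, takes the value `x i` and is constant up to
order `μ`. Composing with it freezes a factor of the auxiliary function near the nodes. -/
noncomputable def flatInterp {F ι : Type*} [Field F] [DecidableEq ι] (s : Finset ι) (x : ι → F)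
    (μ : ℕ) : F[X] :=
  ∑ i ∈ s, (bump F μ).comp (Lagrange.basis s x i) * C (x i)

theorem pow_dvd_flatInterp_sub {F ι : Type*} [Field F] [DecidableEq ι] {s : Finset ι} {x : ι → F}
    (hx : Set.InjOn x s) (μ : ℕ) {i : ι} (hi : i ∈ s) :
    (X - C (x i)) ^ μ ∣ flatInterp s x μ - C (x i) := by
  have hself : X - C (x i) ∣ 1 - Lagrange.basis s x i := by
    rw [dvd_iff_isRoot, IsRoot, eval_sub, eval_one, Lagrange.eval_basis_self hx hi, sub_self]
  have hother : ∀ j ∈ s.erase i, X - C (x i) ∣ Lagrange.basis s x j := fun j hj => by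
    rw [dvd_iff_isRoot, IsRoot, Lagrange.eval_basis_of_ne (Finset.ne_of_mem_erase hj) hi]
  rw [flatInterp, ← Finset.add_sum_erase _ _ hi,
    show ∀ a b c : F[X], a * c + b - c = (a - 1) * c + b by intros; ring]
  exact dvd_add ((pow_dvd_bump_comp_sub_one hself μ).mul_right _)
    (Finset.dvd_sum fun j hj => (pow_dvd_bump_comp (hother j hj) μ).mul_right _)

/-- The midpoints of the `n` equal subintervals of `[0, S]`. -/
noncomputable def node (S : ℝ) (n i : ℕ) : ℝ := S * (2 * i + 1) / (2 * n)

variable {S : ℝ} {n i : ℕ}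

theorem node_sub_node (hn : n ≠ 0) (i j : ℕ) : node S n i - node S n j = S / n * (i - j) := by
  rw [node, node]
  field_simp
  ring

theorem node_injective (hS : S ≠ 0) (hn : n ≠ 0) : Function.Injective (node S n) := by
  intro i j h
  have h := sub_eq_zero.2 h
  rw [node_sub_node hn, mul_eq_zero_iff_left (by positivity), sub_eq_zero] at h
  exact_mod_cast h

theorem node_nonneg (hS : 0 ≤ S) : 0 ≤ node S n i := by
  rw [node]; positivity

theorem node_le (hS : 0 ≤ S) (hi : i < n) : node S n i ≤ S := by
  have hn : (0 : ℝ) < n := by exact_mod_cast i.zero_le.trans_lt hi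
  have hin : (i : ℝ) + 1 ≤ n := by exact_mod_cast hi
  rw [node, div_le_iff₀ (by positivity)]
  nlinarith

theorem norm_ofReal_node_le (hS : 0 ≤ S) (hi : i < n) : ‖(node S n i : ℂ)‖ ≤ S := by
  rw [Complex.norm_real, Real.norm_of_nonneg (node_nonneg hS)]
  exact node_le hS hi

theorem node_reflect (hi : i < n) : node S n (n - 1 - i) = S - node S n i := by
  have hn : (n : ℝ) ≠ 0 := by exact_mod_cast (i.zero_le.trans_lt hi).ne'
  rw [node, node, Nat.cast_sub (by omega), Nat.cast_sub (by omega)]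
  push_cast
  field_simp
  ring

theorem abs_sub_mul_sub_reflect_le {a t : ℝ} (ha : a ∈ Set.Icc 0 S) (ht : t ∈ Set.Icc 0 S) :
    |(t - a) * (t - (S - a))| ≤ (S / 2) ^ 2 := by
  have hdiff : (t - a) * (t - (S - a)) = (t - S / 2) ^ 2 - (a - S / 2) ^ 2 := by ring
  have hsq : ∀ b ∈ Set.Icc 0 S, (b - S / 2) ^ 2 ≤ (S / 2) ^ 2 := fun b hb =>
    sq_le_sq' (by linarith [hb.1]) (by linarith [hb.2])
  rw [hdiff]
  exact abs_sub_le_of_nonneg_of_le (sq_nonneg _) (hsq t ht) (sq_nonneg _) (hsq a ha)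

-- The factors at mirror-image nodes are multiplied in pairs.
theorem abs_prod_sub_node_le (n : ℕ) {t : ℝ} (ht : t ∈ Set.Icc 0 S) :
    |∏ i ∈ Finset.range n, (t - node S n i)| ≤ (S / 2) ^ n := by
  have hS : 0 ≤ S := ht.1.trans ht.2
  have hpair : (∏ i ∈ Finset.range n, (t - node S n i)) ^ 2 =
      ∏ i ∈ Finset.range n, ((t - node S n i) * (t - node S n (n - 1 - i))) := by
    rw [Finset.prod_mul_distrib, Finset.prod_range_reflect (fun i => t - node S n i), sq]
  refine (sq_le_sq₀ (abs_nonneg _) (by positivity)).1 ?_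
  calc |∏ i ∈ Finset.range n, (t - node S n i)| ^ 2
      = ∏ i ∈ Finset.range n, |(t - node S n i) * (t - node S n (n - 1 - i))| := by
        rw [← abs_pow, hpair, Finset.abs_prod]
    _ ≤ ∏ i ∈ Finset.range n, (S / 2) ^ 2 := by
        refine Finset.prod_le_prod (fun _ _ => abs_nonneg _) fun i hi => ?_
        have hi := Finset.mem_range.1 hi
        rw [node_reflect hi]
        exact abs_sub_mul_sub_reflect_le ⟨node_nonneg hS, node_le hS hi⟩ ht
    _ = ((S / 2) ^ n) ^ 2 := by
        rw [Finset.prod_const, Finset.card_range, ← pow_mul, ← pow_mul, mul_comm]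

theorem prod_erase_abs_sub (hi : i < n) :
    ∏ j ∈ (Finset.range n).erase i, |(i : ℝ) - j| = i.factorial * (n - 1 - i).factorial := by
  have hunion : (Finset.range n).erase i = Finset.range i ∪ Finset.Ico (i + 1) n := by
    ext j; simp; omega
  have hdisj : Disjoint (Finset.range i) (Finset.Ico (i + 1) n) := by
    rw [Finset.disjoint_left]; intro j; simp; omega
  rw [hunion, Finset.prod_union hdisj]
  congr 1
  · rw [← Finset.prod_range_reflect, ← Finset.prod_range_add_one_eq_factorial, Nat.cast_prod]
    refine Finset.prod_congr rfl fun j hj => ?_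
    have hj := Finset.mem_range.1 hj
    rw [Nat.cast_sub (by omega), Nat.cast_sub (by omega)]
    push_cast
    rw [abs_of_nonneg] <;> [ring; (ring_nf; positivity)]
  · rw [Finset.prod_Ico_eq_prod_range, ← Finset.prod_range_add_one_eq_factorial, Nat.cast_prod,
      show n - (i + 1) = n - 1 - i by omega]
    refine Finset.prod_congr rfl fun j _ => ?_
    push_cast
    rw [abs_sub_comm, abs_of_nonneg] <;> [ring; (ring_nf; positivity)]

theorem pow_le_exp_mul_two_pow_mul_factorial (hi : i < n) :
    (n : ℝ) ^ (n - 1) ≤ (2 * exp 1) ^ n * (i.factorial * (n - 1 - i).factorial) := by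
  have hfact : ((n - 1).factorial : ℝ) ≤ 2 ^ n * (i.factorial * (n - 1 - i).factorial) := by
    have hchoose : ((n - 1).choose i : ℝ) ≤ 2 ^ n := by
      exact_mod_cast (Nat.choose_le_two_pow _ _).trans (Nat.pow_le_pow_right two_pos (by omega))
    rw [← Nat.choose_mul_factorial_mul_factorial (by omega : i ≤ n - 1)]
    push_cast
    rw [mul_assoc]
    gcongr
  have hexp : (n : ℝ) ^ (n - 1) ≤ exp n * (n - 1).factorial := by
    rw [← div_le_iff₀ (by positivity)]
    exact pow_div_factorial_le_exp (n : ℝ) n.cast_nonneg (n - 1)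
  calc _ ≤ _ := hexp
    _ ≤ exp n * (2 ^ n * (i.factorial * (n - 1 - i).factorial)) := by gcongr
    _ = _ := by rw [mul_pow, ← exp_nat_mul, mul_one]; ring

theorem norm_eval_basis_node_le (hS : 0 < S) {ρ : ℝ} (hρ : 0 ≤ ρ) (hi : i < n) {z : ℂ}
    (hz : ‖z‖ ≤ ρ * S) :
    ‖(Lagrange.basis (Finset.range n) (fun j => (node S n j : ℂ)) i).eval z‖ ≤
      (2 * exp 1 * (ρ + 1)) ^ n := by
  have hn : 0 < n := i.zero_le.trans_lt hi
  have hcard : ((Finset.range n).erase i).card = n - 1 := by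
    rw [Finset.card_erase_of_mem (Finset.mem_range.2 hi), Finset.card_range]
  have hden : ∏ j ∈ (Finset.range n).erase i, ‖(node S n i : ℂ) - node S n j‖ =
      (S / n) ^ (n - 1) * (i.factorial * (n - 1 - i).factorial) := by
    rw [← prod_erase_abs_sub hi, ← hcard, ← Finset.prod_const, ← Finset.prod_mul_distrib]
    refine Finset.prod_congr rfl fun j _ => ?_
    rw [← Complex.ofReal_sub, node_sub_node hn.ne', Complex.norm_real, Real.norm_eq_abs, abs_mul,
      abs_of_pos (by positivity)]
  have hnum : ∏ j ∈ (Finset.range n).erase i, ‖z - node S n j‖ ≤ ((ρ + 1) * S) ^ (n - 1) := by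
    rw [← hcard, ← Finset.prod_const]
    refine Finset.prod_le_prod (fun _ _ => norm_nonneg _) fun j hj => ?_
    have := norm_ofReal_node_le hS.le (Finset.mem_range.1 (Finset.mem_of_mem_erase hj))
    linarith [norm_sub_le z (node S n j)]
  have heval : ‖(Lagrange.basis (Finset.range n) (fun j => (node S n j : ℂ)) i).eval z‖ =
      (∏ j ∈ (Finset.range n).erase i, ‖z - node S n j‖) /
        ∏ j ∈ (Finset.range n).erase i, ‖(node S n i : ℂ) - node S n j‖ := by
    simp [Lagrange.basis, Lagrange.basisDivisor, eval_prod, Finset.prod_mul_distrib, norm_prod,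
      div_eq_inv_mul]
  rw [heval, hden, div_le_iff₀ (by positivity)]
  have hpow : (ρ + 1) ^ (n - 1) ≤ (ρ + 1) ^ n := pow_le_pow_right₀ (by linarith) (by omega)
  calc _ ≤ ((ρ + 1) * S) ^ (n - 1) := hnum
    _ = (ρ + 1) ^ (n - 1) * ((S / n) ^ (n - 1) * (n : ℝ) ^ (n - 1)) := by
        rw [← mul_pow, ← mul_pow]; congr 1; field_simp
    _ ≤ (ρ + 1) ^ n * ((S / n) ^ (n - 1) *
        ((2 * exp 1) ^ n * (i.factorial * (n - 1 - i).factorial))) := by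
        gcongr
        exact pow_le_exp_mul_two_pow_mul_factorial hi
    _ = _ := by rw [mul_pow (2 * exp 1)]; ring

theorem norm_eval_flatInterp_node_le (hS : 0 < S) {ρ : ℝ} (hρ : 0 ≤ ρ) (n μ : ℕ) {z : ℂ}
    (hz : ‖z‖ ≤ ρ * S) :
    ‖(flatInterp (Finset.range n) (fun j => (node S n j : ℂ)) μ).eval z‖ ≤
      n * S * (1 + 2 * (2 * exp 1 * (ρ + 1)) ^ n) ^ (2 * μ) := by
  rw [flatInterp, eval_finsetSum]
  simp only [eval_mul, eval_comp, eval_C]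
  refine (norm_sum_le_of_le (Finset.range n)
    (f := fun j => (bump ℂ μ).eval ((Lagrange.basis (Finset.range n)
      (fun j => (node S n j : ℂ)) j).eval z) * node S n j) (n := fun _ =>
    (1 + 2 * (2 * exp 1 * (ρ + 1)) ^ n) ^ (2 * μ) * S) fun i hi => ?_).trans_eq ?_
  · have hi := Finset.mem_range.1 hi
    rw [norm_mul]
    gcongr
    · refine (norm_eval_bump_le μ _).trans ?_
      gcongr
      exact norm_eval_basis_node_le hS hρ hi hz
    · exact norm_ofReal_node_le hS.le hi
  · rw [Finset.sum_const, Finset.card_range, nsmul_eq_mul]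
    ring

end FlatInterpolation

section Extrapolation

theorem norm_le_of_le_analyticOrderAt_node {f : ℂ → ℂ} (hf : Differentiable ℂ f) {S ρ A : ℝ}
    (hS : 0 < S) (hρ : 1 < ρ) {n μ : ℕ} (hn : n ≠ 0)
    (h : ∀ i < n, μ ≤ analyticOrderAt f (node S n i)) (hA : ∀ z, ‖z‖ = ρ * S → ‖f z‖ ≤ A)
    {t : ℝ} (ht : t ∈ Set.Icc 0 S) : ‖f t‖ ≤ A * (1 / (2 * (ρ - 1))) ^ (n * μ) := by
  have hρ₀ : 0 < ρ - 1 := by linarith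
  have hA₀ : 0 ≤ A := (norm_nonneg _).trans
    (hA (ρ * S : ℝ) (by rw [Complex.norm_real, Real.norm_of_nonneg (by nlinarith)]))
  set nodes := (Finset.range n).image fun i => (node S n i : ℂ) with hnodes
  have hprod (z : ℂ) : ∏ r ∈ nodes, (z - r) = ∏ i ∈ Finset.range n, (z - node S n i) :=
    Finset.prod_image fun i _ j _ hij => node_injective hS.ne' hn (Complex.ofReal_injective hij)
  have horder : ∀ r ∈ nodes, μ ≤ analyticOrderAt f r := by
    simpa [hnodes] using h
  have hcircle (z : ℂ) (hz : ‖z‖ = ρ * S) : ((ρ - 1) * S) ^ n ≤ ‖∏ r ∈ nodes, (z - r)‖ := by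
    rw [hprod, norm_prod]
    conv_lhs => rw [← Finset.card_range n, ← Finset.prod_const]
    refine Finset.prod_le_prod (fun _ _ => by positivity) fun i hi => ?_
    have := norm_ofReal_node_le hS.le (Finset.mem_range.1 hi)
    linarith [norm_sub_norm_le z (node S n i)]
  have hsegment : ‖∏ r ∈ nodes, ((t : ℂ) - r)‖ ≤ (S / 2) ^ n := by
    rw [hprod]
    exact_mod_cast abs_prod_sub_node_le n ht
  have htR : ‖(t : ℂ)‖ ≤ ρ * S := by
    rw [Complex.norm_real, Real.norm_of_nonneg ht.1]
    nlinarith [ht.2]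
  calc ‖f t‖ ≤ ‖∏ r ∈ nodes, ((t : ℂ) - r)‖ ^ μ * (A / (((ρ - 1) * S) ^ n) ^ μ) :=
        norm_le_of_le_analyticOrderAt hf horder (by positivity) (by positivity) hA hcircle htR
    _ ≤ ((S / 2) ^ n) ^ μ * (A / (((ρ - 1) * S) ^ n) ^ μ) := by gcongr
    _ = A * (((S / 2) / ((ρ - 1) * S)) ^ n) ^ μ := by simp only [div_pow]; ring
    _ = _ := by
        rw [← pow_mul, show S / 2 / ((ρ - 1) * S) = 1 / (2 * (ρ - 1)) by field_simp]

variable {ι : Type*} {s : Finset ι} {θ τ : ι → ℝ} {w : ℝ}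

theorem norm_exp_mul_sub_add_le {θ τ R : ℝ} {z v : ℂ} (h : θ + τ ∈ Set.Icc 0 w) (hz : ‖z‖ ≤ R)
    (hv : ‖τ * (v - z)‖ ≤ 1) :
    ‖Complex.exp (z * (θ - (w / 2 : ℝ)) + τ * v)‖ ≤ exp (w / 2 * R + 1) := by
  have hw : 0 ≤ w := h.1.trans h.2
  refine (Complex.norm_exp_le_exp_norm _).trans (exp_le_exp.2 ?_)
  have hsplit : z * (θ - (w / 2 : ℝ)) + τ * v =
      ((θ + τ - w / 2 : ℝ) : ℂ) * z + τ * (v - z) := by push_cast; ring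
  have hcentre : |θ + τ - w / 2| ≤ w / 2 := abs_le.2 ⟨by linarith [h.1], by linarith [h.2]⟩
  rw [hsplit]
  refine norm_add_le_of_le ?_ hv
  rw [norm_mul, Complex.norm_real, Real.norm_eq_abs]
  gcongr

theorem norm_sum_mul_exp_sub_le {q : ι → ℂ} {B S t κ δ : ℝ} {v : ℂ} (ht : t ∈ Set.Icc 0 S)
    (hq : ∀ l ∈ s, ‖q l‖ ≤ B) (h : ∀ l ∈ s, θ l + τ l ∈ Set.Icc 0 w) (hδ : δ ≤ 1)
    (hv : ∀ l ∈ s, ‖τ l * (v - t)‖ ≤ δ) :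
    ‖∑ l ∈ s, q l * Complex.exp (t * (θ l + τ l)) -
        Complex.exp (t * κ) * ∑ l ∈ s, q l * Complex.exp (t * (θ l - κ) + τ l * v)‖ ≤
      s.card * (B * exp (w * S) * (2 * δ)) := by
  have hterm (l : ι) : q l * Complex.exp (t * (θ l + τ l)) -
      Complex.exp (t * κ) * (q l * Complex.exp (t * (θ l - κ) + τ l * v)) =
      q l * Complex.exp (t * (θ l + τ l)) * -(Complex.exp (τ l * (v - t)) - 1) := by
    have hexp : Complex.exp (t * κ) * Complex.exp (t * (θ l - κ) + τ l * v) =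
        Complex.exp (t * (θ l + τ l)) * Complex.exp (τ l * (v - t)) := by
      rw [← Complex.exp_add, ← Complex.exp_add]; ring_nf
    linear_combination -(q l * hexp)
  rw [Finset.mul_sum, ← Finset.sum_sub_distrib, ← nsmul_eq_mul]
  refine (norm_sum_le _ _).trans (Finset.sum_le_card_nsmul _ _ _ fun l hl => ?_)
  have hB : 0 ≤ B := (norm_nonneg _).trans (hq l hl)
  have hmain : ‖Complex.exp (t * (θ l + τ l))‖ ≤ exp (w * S) := by
    rw [← Complex.ofReal_add, ← Complex.ofReal_mul, Complex.norm_exp_ofReal, mul_comm w]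
    exact exp_le_exp.2 (mul_le_mul ht.2 (h l hl).2 (h l hl).1 (ht.1.trans ht.2))
  have hpert : ‖Complex.exp (τ l * (v - t)) - 1‖ ≤ 2 * δ :=
    (Complex.norm_exp_sub_one_le ((hv l hl).trans hδ)).trans (by linarith [hv l hl])
  rw [hterm, norm_mul, norm_mul, norm_neg]
  gcongr
  exact hq l hl

variable {Q : ι → ℂ[X]} {n μ : ℕ} {S ρ B ε M : ℝ}

theorem norm_mul_flatInterp_node_sub_le {τ : ℝ} (hS : 0 < S) (hρ : 0 ≤ ρ) (hτ : |τ| ≤ ε)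
    (hM : n * S * (1 + 2 * (2 * exp 1 * (ρ + 1)) ^ n) ^ (2 * μ) + ρ * S ≤ M) {z : ℂ}
    (hz : ‖z‖ ≤ ρ * S) :
    ‖τ * ((flatInterp (Finset.range n) (fun j => (node S n j : ℂ)) μ).eval z - z)‖ ≤ ε * M := by
  rw [norm_mul, Complex.norm_real, Real.norm_eq_abs]
  refine mul_le_mul hτ ?_ (norm_nonneg _) ((abs_nonneg _).trans hτ)
  exact (norm_sub_le_of_le (norm_eval_flatInterp_node_le hS hρ n μ hz) hz).trans hM

theorem le_analyticOrderAt_flatInterp_node_sub {S : ℝ} {n k : ℕ} (hS : S ≠ 0) (hn : n ≠ 0) (μ : ℕ)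
    (hk : k < n) : μ ≤ analyticOrderAt
      (fun z => (flatInterp (Finset.range n) (fun j => (node S n j : ℂ)) μ).eval z - node S n k)
      (node S n k) := by
  simpa [Function.comp_def] using le_analyticOrderAt_eval_of_pow_dvd (pow_dvd_flatInterp_sub
    (Complex.ofReal_injective.comp (node_injective hS hn)).injOn μ (Finset.mem_range.2 hk))

/- The exponents `θ l + τ l` only give exact vanishing at the nodes when the derivatives are formed
with `θ l`. Replacing `z * τ l` by `τ l * V z`, with `V` a flat interpolant of the identity, makes
the factor `exp (τ l * V z)` invisible to these derivatives; the price is the term with `ε`. -/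
theorem norm_sum_eval_mul_exp_le (hn : n ≠ 0) (hS : 0 < S) (hρ : 1 < ρ) (hB : 0 ≤ B) (hw : 0 ≤ w)
    (h : ∀ k < n, ∀ i j, i + j < μ → ∑ l ∈ s, (hasseDeriv i (Q l)).eval (node S n k : ℂ) *
      (θ l : ℂ) ^ j * Complex.exp (node S n k * (θ l + τ l)) = 0)
    (hQ : ∀ l ∈ s, ∀ z : ℂ, ‖z‖ ≤ ρ * S → ‖(Q l).eval z‖ ≤ B)
    (hθτ : ∀ l ∈ s, θ l + τ l ∈ Set.Icc 0 w) (hτ : ∀ l ∈ s, |τ l| ≤ ε)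
    (hM : n * S * (1 + 2 * (2 * exp 1 * (ρ + 1)) ^ n) ^ (2 * μ) + ρ * S ≤ M)
    (hε : ε * M ≤ 1) {t : ℝ} (ht : t ∈ Set.Icc 0 S) :
    ‖∑ l ∈ s, (Q l).eval (t : ℂ) * Complex.exp (t * (θ l + τ l))‖ ≤
      s.card * B * (exp (w * S * (1 + ρ) / 2 + 1) * (1 / (2 * (ρ - 1))) ^ (n * μ) +
        exp (w * S) * (2 * (ε * M))) := by
  have hρ₀ : 0 ≤ ρ := by linarith
  set V := flatInterp (Finset.range n) (fun j => (node S n j : ℂ)) μ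
  have hτV : ∀ l ∈ s, ∀ z : ℂ, ‖z‖ ≤ ρ * S → ‖τ l * (V.eval z - z)‖ ≤ ε * M :=
    fun l hl z => norm_mul_flatInterp_node_sub_le hS hρ₀ (hτ l hl) hM
  have htR : ‖(t : ℂ)‖ ≤ ρ * S := by
    rw [Complex.norm_real, Real.norm_of_nonneg ht.1]
    nlinarith [ht.2]
  set G : ℂ → ℂ := fun z => ∑ l ∈ s, (Q l).eval z *
    Complex.exp (z * (θ l - (w / 2 : ℝ)) + τ l * V.eval z)
  have hGdiff : Differentiable ℂ G := by
    have := fun l => (Q l).differentiable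
    have := V.differentiable
    fun_prop
  have hGorder (k : ℕ) (hk : k < n) : μ ≤ analyticOrderAt G (node S n k) :=
    le_analyticOrderAt_sum_eval_mul_exp_add s Q _ _ V.differentiable _
      (le_analyticOrderAt_flatInterp_node_sub hS.ne' hn μ hk) (h k hk)
  have hGcircle (z : ℂ) (hz : ‖z‖ = ρ * S) :
      ‖G z‖ ≤ s.card * (B * exp (w / 2 * (ρ * S) + 1)) := by
    rw [← nsmul_eq_mul]
    refine (norm_sum_le _ _).trans (Finset.sum_le_card_nsmul _ _ _ fun l hl => ?_)
    rw [norm_mul]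
    exact mul_le_mul (hQ l hl z hz.le)
      (norm_exp_mul_sub_add_le (hθτ l hl) hz.le ((hτV l hl z hz.le).trans hε)) (norm_nonneg _) hB
  have hGt := norm_le_of_le_analyticOrderAt_node hGdiff hS hρ hn hGorder hGcircle ht
  have hshift : ‖Complex.exp (t * (w / 2 : ℝ))‖ ≤ exp (S * (w / 2)) := by
    rw [← Complex.ofReal_mul, Complex.norm_exp_ofReal]
    gcongr
    exact ht.2
  have hsub := norm_sum_mul_exp_sub_le (κ := w / 2) ht (fun l hl => hQ l hl t htR) hθτ hε
    fun l hl => hτV l hl t htR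
  calc _ ≤ exp (S * (w / 2)) * (s.card * (B * exp (w / 2 * (ρ * S) + 1)) *
          (1 / (2 * (ρ - 1))) ^ (n * μ)) + s.card * (B * exp (w * S) * (2 * (ε * M))) := by
        refine (norm_le_norm_add_norm_sub' _ (Complex.exp (t * (w / 2 : ℝ)) * G t)).trans
          (add_le_add ?_ hsub)
        rw [norm_mul]
        gcongr
    _ = s.card * B * (exp (S * (w / 2)) * exp (w / 2 * (ρ * S) + 1) *
          (1 / (2 * (ρ - 1))) ^ (n * μ) + exp (w * S) * (2 * (ε * M))) := by ring
    _ = _ := by rw [← exp_add]; ring_nf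

end Extrapolation

section FeldmanPolynomials

open scoped Nat

theorem factorial_nsmul_choose_eq_prod {R : Type*} [CommRing R] [BinomialRing R] (a : R) (r : ℕ) :
    r ! • Ring.choose a r = ∏ i ∈ Finset.range r, (a - i) := by
  rw [← Ring.descPochhammer_eq_factorial_smul_choose]
  induction r with
  | zero => simp
  | succ r ih =>
    rw [descPochhammer_succ_right, smeval_mul, ih, Finset.prod_range_succ, smeval_sub, smeval_X,
      smeval_natCast]
    simp

theorem choose_eq_inv_factorial_mul_prod {K : Type*} [Field K] [CharZero K] (a : K) (r : ℕ) :
    Ring.choose a r = (r ! : K)⁻¹ * ∏ i ∈ Finset.range r, (a - i) := by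
  rw [← factorial_nsmul_choose_eq_prod, nsmul_eq_mul,
    inv_mul_cancel_left₀ (by exact_mod_cast r.factorial_ne_zero)]

theorem choose_X_comp {R : Type*} [CommRing R] [BinomialRing R[X]] (f : R[X]) (r : ℕ) :
    (Ring.choose X r).comp f = Ring.choose f r := by
  simpa using Ring.map_choose (compRingHom f) X r

theorem choose_X_map_eval (z : ℂ) (r : ℕ) :
    ((Ring.choose (X : ℚ[X]) r).map (algebraMap ℚ ℂ)).eval z = Ring.choose z r := by
  rw [eval_map_algebraMap]
  simpa using Ring.map_choose (aeval (R := ℚ) z) X r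

theorem natDegree_choose_X (r : ℕ) : (Ring.choose (X : ℚ[X]) r).natDegree = r := by
  have hfact : (r ! : ℚ) ≠ 0 := by exact_mod_cast r.factorial_ne_zero
  rw [← natDegree_C_mul hfact, C_eq_natCast, ← nsmul_eq_mul, factorial_nsmul_choose_eq_prod]
  simp_rw [← C_eq_natCast]
  rw [natDegree_prod_of_monic _ _ fun i _ => monic_X_sub_C _]
  simp only [natDegree_X_sub_C, Finset.sum_const, Finset.card_range, smul_eq_mul, mul_one]

theorem choose_X_ne_zero (r : ℕ) : Ring.choose (X : ℚ[X]) r ≠ 0 := by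
  rcases eq_or_ne r 0 with rfl | hr
  · simp
  · exact ne_zero_of_natDegree_gt (n := 0) (by rw [natDegree_choose_X]; omega)

theorem choose_C_mul_X_succ (d : ℚ) (i : ℕ) :
    Ring.choose (C d * X : ℚ[X]) (i + 1) =
      C (d / (i + 1)) * X * ∏ t ∈ Finset.range i, (C (d / (t + 1)) * X - 1) := by
  have hfactor (t : ℕ) : C d * X - ((t + 1 : ℕ) : ℚ[X]) =
      ((t + 1 : ℕ) : ℚ[X]) * (C (d / (t + 1)) * X - 1) := by
    have hC : C d = ((t + 1 : ℕ) : ℚ[X]) * C (d / (t + 1)) := by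
      rw [← C_eq_natCast, ← C_mul]; congr 1; push_cast; field_simp
    rw [hC]; ring
  have hC : C d = ((i + 1 : ℕ) : ℚ[X]) * C (d / (i + 1)) := by
    rw [← C_eq_natCast, ← C_mul]; congr 1; push_cast; field_simp
  refine nsmul_right_injective (Nat.factorial_ne_zero (i + 1)) ?_
  simp only [factorial_nsmul_choose_eq_prod]
  rw [Finset.prod_range_succ']
  simp only [hfactor, Finset.prod_mul_distrib]
  rw [← Nat.cast_prod, Finset.prod_range_add_one_eq_factorial, Nat.factorial_succ, nsmul_eq_mul, hC]
  push_cast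
  ring

theorem choose_C_mul_X_mem_liftsRing {d i : ℕ} (hd : ∀ t, 0 < t → t ≤ i → t ∣ d) :
    Ring.choose (C (d : ℚ) * X : ℚ[X]) i ∈ liftsRing (Int.castRingHom ℚ) := by
  set L := liftsRing (Int.castRingHom ℚ)
  have hC (t : ℕ) (ht : t < i) : C ((d : ℚ) / (t + 1)) * X ∈ L := by
    obtain ⟨e, rfl⟩ := hd (t + 1) t.succ_pos ht
    have hcast : ((((t + 1) * e : ℕ) : ℚ) / (t + 1)) = (e : ℤ) := by push_cast; field_simp
    rw [hcast, ← lifts_iff_liftsRing]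
    exact base_mul_mem_lifts _ (X_mem_lifts _)
  rcases i with _ | i
  · simp
  · rw [choose_C_mul_X_succ]
    exact L.mul_mem (hC i i.lt_succ_self) (L.prod_mem fun t ht =>
      L.sub_mem (hC t ((Finset.mem_range.1 ht).trans i.lt_succ_self)) L.one_mem)

theorem factorial_dvd_prod_sub (a : ℤ) (r : ℕ) : (r ! : ℤ) ∣ ∏ i ∈ Finset.range r, (a - i) := by
  rw [← factorial_nsmul_choose_eq_prod, nsmul_eq_mul]
  exact dvd_mul_right _ _

theorem dvd_prod_sub_mul_of_isCoprime {o b : ℤ} {r : ℕ} (ho : o ∣ r !) (hb : IsCoprime b o)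
    (a : ℤ) : o ∣ ∏ i ∈ Finset.range r, (a - b * i) := by
  obtain ⟨u, w, huw⟩ := hb
  have hmod : ∏ i ∈ Finset.range r, (a - b * i) ≡
      ∏ i ∈ Finset.range r, (b * (a * u - i)) [ZMOD o] :=
    Int.ModEq.prod fun i _ =>
      Int.modEq_iff_dvd.2 ⟨-(a * w), by linear_combination a * huw⟩
  refine hmod.dvd_iff.2 ?_
  rw [Finset.prod_mul_distrib]
  exact (ho.trans (factorial_dvd_prod_sub _ r)).mul_left _

theorem le_of_two_pow_dvd_factorial {v r : ℕ} (h : 2 ^ v ∣ r !) : v ≤ r := by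
  rcases eq_or_ne r 0 with rfl | hr
  · simpa using h
  · have := (le_emultiplicity_of_pow_dvd h).trans_lt (Nat.emultiplicity_two_factorial_lt hr)
    exact_mod_cast this.le

theorem factorial_dvd_two_pow_mul_prod (a : ℤ) (j r : ℕ) :
    (r ! : ℤ) ∣ 2 ^ r * ∏ i ∈ Finset.range r, (a - 2 ^ j * i) := by
  obtain ⟨v, o, ho, hvo⟩ := Nat.exists_eq_two_pow_mul_odd r.factorial_ne_zero
  have hcoprime : IsCoprime (2 ^ j : ℤ) o :=
    (Nat.isCoprime_iff_coprime.2 (Nat.coprime_two_left.2 ho)).pow_left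
  have hodd := dvd_prod_sub_mul_of_isCoprime (r := r)
    (by exact_mod_cast Dvd.intro_left _ hvo.symm) hcoprime a
  rw [hvo]
  push_cast
  exact mul_dvd_mul (pow_dvd_pow 2 (le_of_two_pow_dvd_factorial ⟨o, hvo⟩)) hodd

theorem exists_int_two_pow_mul_choose (a : ℤ) (j r : ℕ) :
    ∃ c : ℤ, (2 : ℚ) ^ ((j + 1) * r) * Ring.choose ((a : ℚ) / 2 ^ j) r = c := by
  obtain ⟨c, hc⟩ := factorial_dvd_two_pow_mul_prod a j r
  refine ⟨c, ?_⟩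
  have hfactor (i : ℕ) : (a : ℚ) / 2 ^ j - i = ((a - 2 ^ j * i : ℤ) : ℚ) / 2 ^ j := by
    push_cast; field_simp
  have hfact : (r ! : ℚ) ≠ 0 := by exact_mod_cast r.factorial_ne_zero
  have hc' : (2 : ℚ) ^ r * ((∏ i ∈ Finset.range r, (a - 2 ^ j * i) : ℤ) : ℚ) = r ! * c := by
    exact_mod_cast hc
  simp only [choose_eq_inv_factorial_mul_prod, hfactor]
  rw [Finset.prod_div_distrib, Finset.prod_const, Finset.card_range, ← Int.cast_prod, add_mul,
    one_mul, pow_add, pow_mul]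
  field_simp
  linear_combination hc'

theorem two_pow_mul_choose_add_mem_liftsRing {d r : ℕ} (hd : ∀ t, 0 < t → t ≤ r → t ∣ d) (a : ℤ)
    (j : ℕ) : C ((2 : ℚ) ^ ((j + 1) * r)) * Ring.choose (C ((a : ℚ) / 2 ^ j) + C (d : ℚ) * X) r ∈
      liftsRing (Int.castRingHom ℚ) := by
  set L := liftsRing (Int.castRingHom ℚ)
  have hint (c : ℤ) : C (c : ℚ) ∈ L := (lifts_iff_liftsRing _ _).1 (C_mem_lifts _ c)
  rw [Ring.add_choose_eq _ (Commute.all _ _), Finset.mul_sum]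
  refine L.sum_mem fun x hx => ?_
  have hx := Finset.HasAntidiagonal.mem_antidiagonal.1 hx
  obtain ⟨c, hc⟩ := exists_int_two_pow_mul_choose a j x.1
  have hsplit : C ((2 : ℚ) ^ ((j + 1) * r)) * Ring.choose (C ((a : ℚ) / 2 ^ j)) x.1 =
      C ((2 ^ ((j + 1) * x.2) * c : ℤ) : ℚ) := by
    rw [← Ring.map_choose, ← C_mul]
    push_cast
    rw [← hc, ← hx]
    ring_nf
  rw [← mul_assoc, hsplit]
  exact L.mul_mem (hint _) (choose_C_mul_X_mem_liftsRing fun t ht htx => hd t ht (by omega))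

/-- Feldman's polynomial of degree `i`: a product of binomial polynomials of degree at most `h`.
Its scaled derivatives at dyadic points are integers with denominators depending only on `h`. -/
noncomputable def feldmanPoly (h i : ℕ) : ℚ[X] :=
  Ring.choose X h ^ (i / h) * Ring.choose X (i % h)

theorem degree_feldmanPoly (h i : ℕ) : (feldmanPoly h i).degree = i := by
  have hne : Ring.choose (X : ℚ[X]) h ^ (i / h) ≠ 0 := pow_ne_zero _ (choose_X_ne_zero h)
  rw [feldmanPoly, degree_eq_natDegree (mul_ne_zero hne (choose_X_ne_zero _)),
    natDegree_mul hne (choose_X_ne_zero _), natDegree_pow, natDegree_choose_X, natDegree_choose_X,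
    mul_comm, Nat.div_add_mod]

theorem coeff_comp_C_add_C_mul_X {R : Type*} [CommSemiring R] (p : R[X]) (z d : R) (m : ℕ) :
    (p.comp (C z + C d * X)).coeff m = d ^ m * (hasseDeriv m p).eval z := by
  have htaylor : p.comp (C z + C d * X) = (taylor z p).comp (C d * X) := by
    rw [taylor_apply, comp_assoc]; congr 1; simp [add_comm]
  rw [htaylor, comp_C_mul_X_coeff, taylor_coeff, mul_comm]

theorem exists_int_hasseDeriv_feldmanPoly {h : ℕ} (hh : 0 < h) {d : ℕ}
    (hd : ∀ t, 0 < t → t ≤ h → t ∣ d) (i m : ℕ) (a : ℤ) (j : ℕ) :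
    ∃ c : ℤ, (2 : ℚ) ^ ((j + 1) * i) *
      (d ^ m * (hasseDeriv m (feldmanPoly h i)).eval ((a : ℚ) / 2 ^ j)) = c := by
  set L := liftsRing (Int.castRingHom ℚ)
  have hrem := (Nat.mod_lt i hh).le
  have hmem := L.mul_mem (L.pow_mem (two_pow_mul_choose_add_mem_liftsRing hd a j) (i / h))
    (two_pow_mul_choose_add_mem_liftsRing (r := i % h) (fun t ht hti => hd t ht (by omega)) a j)
  obtain ⟨c, hc⟩ := (lifts_iff_coeff_lifts _).1 ((lifts_iff_liftsRing _ _).2 hmem) m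
  refine ⟨c, Eq.trans ?_ hc.symm⟩
  have hexp : (j + 1) * i = (j + 1) * h * (i / h) + (j + 1) * (i % h) := by
    conv_lhs => rw [← Nat.div_add_mod i h]
    ring
  rw [← coeff_comp_C_add_C_mul_X, ← coeff_C_mul, feldmanPoly, mul_comp, pow_comp, choose_X_comp,
    choose_X_comp, mul_pow, ← C_pow, ← pow_mul, hexp, pow_add, C_mul]
  congr 1
  ring

theorem norm_hasseDeriv_eval_le (Q : ℂ[X]) (m : ℕ) {R M : ℝ}
    (hQ : ∀ z : ℂ, ‖z‖ ≤ R + 1 → ‖Q.eval z‖ ≤ M) {z : ℂ} (hz : ‖z‖ ≤ R) :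
    ‖(hasseDeriv m Q).eval z‖ ≤ M := by
  have hsphere : ∀ w ∈ Metric.sphere z 1, ‖Q.eval w‖ ≤ M := fun w hw => hQ w <| by
    rw [mem_sphere_iff_norm] at hw
    linarith [norm_sub_norm_le w z]
  have hcauchy := Complex.norm_iteratedDeriv_le_of_forall_mem_sphere_norm_le m one_pos
    Q.differentiable.diffContOnCl hsphere
  rw [iteratedDeriv_eval, norm_mul, one_pow, div_one, Complex.norm_natCast] at hcauchy
  exact le_of_mul_le_mul_left hcauchy (by positivity)

theorem norm_choose_le {h r : ℕ} (hh : 0 < h) (hr : r ≤ h) {A : ℝ} {z : ℂ} (hz : ‖z‖ ≤ A) :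
    ‖Ring.choose z r‖ ≤ (exp 1 * (A + h) / h) ^ h := by
  have hA : 0 ≤ A := (norm_nonneg z).trans hz
  have hh₀ : (0 : ℝ) < h := by exact_mod_cast hh
  have hprod : ∏ i ∈ Finset.range r, ‖z - i‖ ≤ (A + h) ^ r := by
    conv_rhs => rw [← Finset.card_range r, ← Finset.prod_const]
    refine Finset.prod_le_prod (fun _ _ => norm_nonneg _) fun i hi => ?_
    have hi : (i : ℝ) ≤ h := by exact_mod_cast (Finset.mem_range.1 hi).le.trans hr
    exact norm_sub_le_of_le hz (by simpa using hi)
  have hone : 1 ≤ (A + h) / h := by rw [le_div_iff₀ hh₀]; linarith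
  rw [choose_eq_inv_factorial_mul_prod, norm_mul, norm_prod, norm_inv, Complex.norm_natCast]
  calc _ ≤ (r ! : ℝ)⁻¹ * (A + h) ^ r := by gcongr
    _ = ((A + h) / h) ^ r * ((h : ℝ) ^ r / r !) := by rw [div_pow]; field_simp
    _ ≤ ((A + h) / h) ^ h * exp h := by
        gcongr
        exact pow_div_factorial_le_exp (h : ℝ) hh₀.le r
    _ = _ := by rw [mul_div_assoc, mul_pow, ← exp_nat_mul, mul_one, mul_comm]

theorem norm_feldmanPoly_le {h i k : ℕ} (hi : i < k * h) {A : ℝ} {z : ℂ}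
    (hz : ‖z‖ ≤ A) :
    ‖((feldmanPoly h i).map (algebraMap ℚ ℂ)).eval z‖ ≤ (exp 1 * (A + h) / h) ^ (k * h) := by
  have hh : 0 < h := pos_of_mul_pos_right (i.zero_le.trans_lt hi) k.zero_le
  have hA : 0 ≤ A := (norm_nonneg z).trans hz
  have hone : 1 ≤ exp 1 * (A + h) / h := by
    rw [le_div_iff₀ (by exact_mod_cast hh)]
    nlinarith [one_le_exp zero_le_one, Nat.cast_nonneg (α := ℝ) h]
  have hquot : i / h + 1 ≤ k := (Nat.div_lt_iff_lt_mul hh).2 hi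
  rw [feldmanPoly, Polynomial.map_mul, Polynomial.map_pow, eval_mul, eval_pow, norm_mul, norm_pow,
    choose_X_map_eval, choose_X_map_eval]
  calc _ ≤ ((exp 1 * (A + h) / h) ^ h) ^ (i / h) * (exp 1 * (A + h) / h) ^ h := by
        gcongr
        · exact norm_choose_le hh le_rfl hz
        · exact norm_choose_le hh (Nat.mod_lt i hh).le hz
    _ = (exp 1 * (A + h) / h) ^ (h * (i / h + 1)) := by rw [← pow_mul, ← pow_add]; ring_nf
    _ ≤ _ := pow_le_pow_right₀ hone (by rw [mul_comm k]; gcongr)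

/-- The integer combination with coefficients `p` of the Feldman polynomials of degree less than
`N`; such polynomials are the coefficients of the auxiliary function. -/
noncomputable def auxPoly (h N : ℕ) (p : ℕ → ℤ) : ℚ[X] :=
  ∑ i ∈ Finset.range N, (p i : ℚ) • feldmanPoly h i

theorem auxPoly_single (h : ℕ) {N i : ℕ} (hi : i < N) :
    auxPoly h N (Pi.single i 1) = feldmanPoly h i := by
  simp [auxPoly, Pi.single_apply, hi]

theorem auxPoly_ne_zero (h : ℕ) {N : ℕ} {p : ℕ → ℤ} {i : ℕ} (hi : i < N) (hp : p i ≠ 0) :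
    auxPoly h N p ≠ 0 := by
  intro hzero
  let F : Polynomial.Sequence ℚ := ⟨feldmanPoly h, degree_feldmanPoly h⟩
  have hpi := linearIndependent_iff'.1 F.linearIndependent (Finset.range N) (fun i => (p i : ℚ))
    hzero i (Finset.mem_range.2 hi)
  exact hp (by exact_mod_cast hpi)

theorem degree_auxPoly_lt (h N : ℕ) (p : ℕ → ℤ) : (auxPoly h N p).degree < N :=
  mem_degreeLT.1 <| (degreeLT ℚ N).sum_mem fun i hi => (degreeLT ℚ N).smul_mem _ <|
    mem_degreeLT.2 <| by
      rw [degree_feldmanPoly]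
      exact_mod_cast Finset.mem_range.1 hi

theorem exists_int_hasseDeriv_auxPoly {h : ℕ} (hh : 0 < h) {d : ℕ}
    (hd : ∀ t, 0 < t → t ≤ h → t ∣ d) (N : ℕ) (p : ℕ → ℤ) {m M : ℕ} (hm : m ≤ M) (a : ℤ) (j : ℕ) :
    ∃ c : ℤ, (2 : ℚ) ^ ((j + 1) * N) * (d : ℚ) ^ M *
      (hasseDeriv m (auxPoly h N p)).eval ((a : ℚ) / 2 ^ j) = c := by
  choose c hc using fun i => exists_int_hasseDeriv_feldmanPoly hh hd i m a j
  refine ⟨∑ i ∈ Finset.range N, 2 ^ ((j + 1) * (N - i)) * d ^ (M - m) * (p i * c i), ?_⟩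
  rw [auxPoly, map_sum, eval_finsetSum, Finset.mul_sum]
  push_cast
  refine Finset.sum_congr rfl fun i hi => ?_
  rw [← hc i, map_smul, eval_smul, smul_eq_mul]
  obtain ⟨e, rfl⟩ := Nat.exists_eq_add_of_le (Finset.mem_range.1 hi).le
  obtain ⟨f, rfl⟩ := Nat.exists_eq_add_of_le hm
  rw [Nat.add_sub_cancel_left, Nat.add_sub_cancel_left, mul_add, pow_add, pow_add]
  ring

theorem hasseDeriv_map {R S : Type*} [Semiring R] [Semiring S] (f : R →+* S) (m : ℕ) (p : R[X]) :
    hasseDeriv m (p.map f) = (hasseDeriv m p).map f := by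
  ext i
  simp [hasseDeriv_coeff]

theorem norm_hasseDeriv_auxPoly_le {h k : ℕ} {p : ℕ → ℤ} {B : ℝ}
    (hp : ∀ i < k * h, |(p i : ℝ)| ≤ B) (m : ℕ) {R : ℝ} {z : ℂ} (hz : ‖z‖ ≤ R) :
    ‖((hasseDeriv m (auxPoly h (k * h) p)).map (algebraMap ℚ ℂ)).eval z‖ ≤
      (k * h : ℕ) * B * (exp 1 * (R + 1 + h) / h) ^ (k * h) := by
  rw [← hasseDeriv_map, mul_assoc, ← nsmul_eq_mul]
  conv_rhs => enter [1]; rw [← Finset.card_range (k * h)]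
  refine norm_hasseDeriv_eval_le _ m (R := R) (fun w hw => ?_) hz
  rw [auxPoly, Polynomial.map_sum, eval_finsetSum]
  refine (norm_sum_le _ _).trans (Finset.sum_le_card_nsmul _ _ _ fun i hi => ?_)
  have hi := Finset.mem_range.1 hi
  have hpi : ‖(algebraMap ℚ ℂ) (p i)‖ ≤ B := by simpa using hp i hi
  rw [Polynomial.map_smul, eval_smul, smul_eq_mul, norm_mul]
  exact mul_le_mul hpi (norm_feldmanPoly_le hi hw) (norm_nonneg _) ((norm_nonneg _).trans hpi)

theorem lcmUpto_le_exp {h : ℕ} (hh : 0 < h) : (h.lcmUpto : ℝ) ≤ exp (2.86 * h) := by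
  have hh' : (1 : ℝ) ≤ h := by exact_mod_cast hh
  have hpsi := Chebyshev.psi_le hh'
  rw [Chebyshev.psi_eq_log_lcmUpto, log_le_iff_le_exp
    (by exact_mod_cast Nat.lcmUpto_pos h)] at hpsi
  refine hpsi.trans (exp_le_exp.2 ?_)
  have hlog_four : log 4 = 2 * log 2 := by
    rw [show (4 : ℝ) = 2 ^ 2 by norm_num, log_pow]; norm_num
  have hlog_h : log h = 2 * log √(h : ℝ) := by
    rw [log_sqrt (by linarith)]; ring
  have hlog_sqrt : log √(h : ℝ) ≤ √(h : ℝ) / exp 1 := by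
    have := log_le_sub_one_of_pos (x := √(h : ℝ) / exp 1) (by positivity)
    rw [log_div (by positivity) (exp_pos 1).ne', log_exp] at this
    linarith
  have hdiv_exp : √(h : ℝ) / exp 1 ≤ √(h : ℝ) * 0.368 := by
    rw [div_le_iff₀ (exp_pos 1), mul_assoc]
    nlinarith [exp_one_gt_d9, sqrt_nonneg (h : ℝ)]
  have hsq : √(h : ℝ) * √(h : ℝ) = h := mul_self_sqrt (by linarith)
  rw [hlog_four, hlog_h]
  nlinarith [log_two_lt_d9, mul_le_mul_of_nonneg_left (hlog_sqrt.trans hdiv_exp)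
    (sqrt_nonneg (h : ℝ))]

end FeldmanPolynomials

section RadicalIndependence

variable {F : Type*} [Field F] {ι : Type*}

section Galois

variable {L : Type*} [Field L] [Algebra F L]

theorem algEquiv_apply_eq_or_eq_neg {x : L} (hx : x ^ 2 ∈ (algebraMap F L).range) (σ : L ≃ₐ[F] L) :
    σ x = x ∨ σ x = -x := by
  obtain ⟨a, ha⟩ := hx
  rw [← sq_eq_sq_iff_eq_or_eq_neg, ← map_pow, ← ha, σ.commutes]

/-- The Kummer character `σ ↦ σ x / x` of an element `x ≠ 0` whose square lies in `F`. -/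
@[simps]
def quadraticCharacter {x : L} (hx : x ≠ 0) (hxF : x ^ 2 ∈ (algebraMap F L).range) :
    (L ≃ₐ[F] L) →* L where
  toFun σ := σ x / x
  map_one' := by simp [hx]
  map_mul' σ τ := by
    rcases algEquiv_apply_eq_or_eq_neg hxF τ with h | h <;> simp [h, hx, neg_div]

theorem quadraticCharacter_eq_iff [IsGalois F L] {x y : L} (hx : x ≠ 0)
    (hxF : x ^ 2 ∈ (algebraMap F L).range) (hy : y ≠ 0) (hyF : y ^ 2 ∈ (algebraMap F L).range) :
    quadraticCharacter hx hxF = quadraticCharacter hy hyF ↔ x * y ∈ (algebraMap F L).range := by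
  have hfix : x * y ∈ (algebraMap F L).range ↔ ∀ σ : L ≃ₐ[F] L, σ (x * y) = x * y :=
    InfiniteGalois.mem_range_algebraMap_iff_fixed (x * y)
  rw [hfix, MonoidHom.ext_iff]
  refine forall_congr' fun σ => ?_
  rw [quadraticCharacter_apply, quadraticCharacter_apply, map_mul, div_eq_div_iff hx hy]
  rcases algEquiv_apply_eq_or_eq_neg hyF σ with h | h <;> rw [h]
  · rw [mul_comm y x]
  · rw [mul_neg, neg_mul, neg_eq_iff_eq_neg, mul_comm y x]

/- Dedekind's independence of characters, applied to the Kummer characters of the `s i`. -/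
theorem sum_smul_filter_mul_mem_range_eq_zero_of_isGalois [IsGalois F L] {I : Finset ι} {c : ι → F}
    {s : ι → L} (hs : ∀ i, s i ≠ 0) (hsF : ∀ i, s i ^ 2 ∈ (algebraMap F L).range)
    (h : ∑ i ∈ I, c i • s i = 0) (i₀ : ι)
    [DecidablePred fun i => s i * s i₀ ∈ (algebraMap F L).range] :
    ∑ i ∈ I with s i * s i₀ ∈ (algebraMap F L).range, c i • s i = 0 := by
  classical
  set χ : ι → (L ≃ₐ[F] L) →* L := fun i => quadraticCharacter (hs i) (hsF i)
  have hχ : ∑ η ∈ I.image χ, (∑ i ∈ I with χ i = η, c i • s i) • (η : (L ≃ₐ[F] L) → L) = 0 := by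
    ext σ
    calc _ = ∑ η ∈ I.image χ, ∑ i ∈ I with χ i = η, c i • s i * χ i σ := by
          simp only [Finset.sum_apply, Pi.smul_apply, smul_eq_mul, Finset.sum_mul]
          refine Finset.sum_congr rfl fun η _ => Finset.sum_congr rfl fun i hi => ?_
          rw [(Finset.mem_filter.1 hi).2]
      _ = ∑ i ∈ I, c i • s i * χ i σ :=
          Finset.sum_fiberwise_of_maps_to (fun i hi => Finset.mem_image_of_mem χ hi) _
      _ = σ (∑ i ∈ I, c i • s i) := by
          rw [map_sum]
          refine Finset.sum_congr rfl fun i _ => ?_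
          rw [map_smul, smul_mul_assoc, quadraticCharacter_apply, mul_div_cancel₀ _ (hs i)]
      _ = 0 := by rw [h, map_zero]
  have hfiber := linearIndependent_iff'.1 (linearIndependent_monoidHom (L ≃ₐ[F] L) L) _ _ hχ (χ i₀)
  simp only [← quadraticCharacter_eq_iff (hs _) (hsF _) (hs i₀) (hsF i₀)]
  by_cases hi₀ : χ i₀ ∈ I.image χ
  · exact hfiber hi₀
  · refine Finset.sum_eq_zero fun i hi => absurd ?_ hi₀
    obtain ⟨hiI, hi⟩ := Finset.mem_filter.1 hi
    exact Finset.mem_image.2 ⟨i, hiI, hi⟩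

end Galois

theorem sum_smul_filter_mul_mem_range_eq_zero [CharZero F] {E : Type*} [Field E] [Algebra F E]
    {I : Finset ι} {c : ι → F} {s : ι → E} (hs : ∀ i, s i ≠ 0)
    (hsF : ∀ i, s i ^ 2 ∈ (algebraMap F E).range) (h : ∑ i ∈ I, c i • s i = 0) (i₀ : ι)
    [DecidablePred fun i => s i * s i₀ ∈ (algebraMap F E).range] :
    ∑ i ∈ I with s i * s i₀ ∈ (algebraMap F E).range, c i • s i = 0 := by
  classical
  let Ω := AlgebraicClosure E
  let L := algebraicClosure F Ω
  have : IsGalois F L := IsAlgClosure.isGalois F L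
  have hmem : ∀ i, algebraMap E Ω (s i) ∈ L := fun i => by
    obtain ⟨a, ha⟩ := hsF i
    refine mem_algebraicClosure_iff.2 (IsAlgebraic.algebraMap (IsAlgebraic.of_pow two_pos ?_))
    exact ha ▸ isAlgebraic_algebraMap a
  let t : ι → L := fun i => ⟨algebraMap E Ω (s i), hmem i⟩
  have hrange : ∀ (x : L) (z : E), (x : Ω) = algebraMap E Ω z →
      (x ∈ (algebraMap F L).range ↔ z ∈ (algebraMap F E).range) := fun x z hxz => by
    simp only [RingHom.mem_range]
    refine exists_congr fun a => ?_
    rw [← (algebraMap E Ω).injective.eq_iff, ← hxz, ← IsScalarTower.algebraMap_apply,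
      ← Subtype.coe_inj]
    rfl
  have ht : ∀ J : Finset ι,
      ((∑ i ∈ J, c i • t i : L) : Ω) = algebraMap E Ω (∑ i ∈ J, c i • s i) := fun J => by
    simp [t, Algebra.smul_def, ← IsScalarTower.algebraMap_apply]
  have ht0 := sum_smul_filter_mul_mem_range_eq_zero_of_isGalois (I := I) (c := c) (s := t)
    (fun i hi => hs i (by simpa [t, Subtype.ext_iff] using hi))
    (fun i => (hrange _ (s i ^ 2) (by simp [t])).2 (hsF i))
    (Subtype.ext (by rw [ht, h]; simp)) i₀
  have hfilter : ∀ i, t i * t i₀ ∈ (algebraMap F L).range ↔ s i * s i₀ ∈ (algebraMap F E).range :=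
    fun i => hrange _ _ (by simp [t])
  simp only [hfilter] at ht0
  refine (algebraMap E Ω).injective ?_
  rw [← ht, ht0, map_zero]; rfl

end RadicalIndependence

section GoldenField

open QuadraticAlgebra

theorem even_and_even_of_two_pow_mul_three_pow_eq {a b : ℕ} {q : ℚ}
    (h : ((2 ^ a * 3 ^ b : ℕ) : ℚ) = q ^ 2 ∨ ((2 ^ a * 3 ^ b : ℕ) : ℚ) = (5 : ℕ) * q ^ 2) :
    Even a ∧ Even b := by
  have hq : q ≠ 0 := by
    rintro rfl
    simp at h
  have hval : ∀ (p : ℕ) [Fact p.Prime], padicValRat p ((2 ^ a * 3 ^ b : ℕ) : ℚ) =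
      a * padicValNat p 2 + b * padicValNat p 3 := fun p _ => by
    rw [padicValRat.of_nat, padicValNat.mul (by positivity) (by positivity), padicValNat.pow,
      padicValNat.pow]
    push_cast; rfl
  have hsq : ∀ (p : ℕ) [Fact p.Prime], padicValRat p (q ^ 2) = 2 * padicValRat p q := fun p _ => by
    rw [padicValRat.pow]; rfl
  have h5sq : ∀ (p : ℕ) [Fact p.Prime],
      padicValRat p ((5 : ℕ) * q ^ 2) = padicValNat p 5 + 2 * padicValRat p q := fun p _ => by
    rw [padicValRat.mul (by norm_num) (by positivity), padicValRat.of_nat, hsq]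
  have : Fact (Nat.Prime 5) := ⟨Nat.prime_five⟩
  have h23 : padicValNat 2 3 = 0 := padicValNat_primes (by norm_num)
  have h32 : padicValNat 3 2 = 0 := padicValNat_primes (by norm_num)
  have h52 : padicValNat 5 2 = 0 := padicValNat_primes (by norm_num)
  have h53 : padicValNat 5 3 = 0 := padicValNat_primes (by norm_num)
  rw [← Int.even_coe_nat a, ← Int.even_coe_nat b]
  rcases h with h | h
  · have h2 := hval 2
    have h3 := hval 3
    rw [h, hsq, padicValNat_self, h23] at h2
    rw [h, hsq, padicValNat_self, h32] at h3
    grind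
  · have h5 := hval 5
    rw [h, h5sq, padicValNat_self, h52, h53] at h5
    omega

instance fact_sq_ne_one_add : Fact (∀ r : ℚ, r ^ 2 ≠ 1 + 1 * r) := ⟨fun r hr => by
  refine (by norm_num : ¬ IsSquare (5 : ℚ)) ⟨2 * r - 1, ?_⟩
  linear_combination -4 * hr⟩

/-- The field `ℚ(√5) = ℚ[ω]` with `ω ^ 2 = ω + 1`; its real embedding sends `ω` to `φ`. -/
abbrev GoldenField := QuadraticAlgebra ℚ 1 1

/-- The embedding of `ℚ(√5)` into `ℝ` with `ω ↦ φ`. -/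
noncomputable def goldenEmbedding : GoldenField →+* ℝ :=
  (QuadraticAlgebra.lift (R := ℚ) (a := 1) (b := 1)
    ⟨φ, by rw [← sq, goldenRatio_sq, one_smul, one_smul, add_comm]⟩).toRingHom

noncomputable instance algebraGoldenFieldReal : Algebra GoldenField ℝ :=
  goldenEmbedding.toAlgebra

theorem algebraMap_omega_eq_goldenRatio : algebraMap GoldenField ℝ ω = φ := by
  simp [RingHom.algebraMap_toAlgebra, goldenEmbedding]

theorem norm_omega_goldenField : (ω : GoldenField).norm = -1 := by
  simp [norm_def]

theorem exists_natCast_eq_sq_of_sq_eq_natCast {x : GoldenField} {m : ℕ} (h : x ^ 2 = m) :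
    ∃ q : ℚ, (m : ℚ) = q ^ 2 ∨ (m : ℚ) = (5 : ℕ) * q ^ 2 := by
  have hre : x.re * x.re + x.im * x.im = m := by simpa [sq] using congrArg re h
  have him : x.im * (2 * x.re + x.im) = 0 := by
    have : x.re * x.im + x.im * x.re + x.im * x.im = 0 := by simpa [sq] using congrArg im h
    linear_combination this
  refine ⟨x.re, (mul_eq_zero.1 him).imp (fun h0 => ?_) fun h0 => ?_⟩
  · rw [← hre, h0]; ring
  · rw [← hre, eq_neg_of_add_eq_zero_right h0]; push_cast; ring

theorem even_of_sq_eq_natCast_mul_omega_pow {x : GoldenField} {m e : ℕ} (hm : m ≠ 0)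
    (h : x ^ 2 = m * (ω : GoldenField) ^ e) : Even e := by
  have hnorm : x.norm ^ 2 = (m : ℚ) ^ 2 * (-1) ^ e := by
    simpa [norm_omega_goldenField] using congrArg QuadraticAlgebra.norm h
  rw [← Nat.not_odd_iff_even]
  intro he
  rw [he.neg_one_pow] at hnorm
  have : (0 : ℚ) < (m : ℚ) ^ 2 := by positivity
  linarith [sq_nonneg x.norm]

theorem even_of_sq_eq_two_pow_mul_three_pow_mul_omega_pow {x : GoldenField} {a b e : ℕ}
    (h : x ^ 2 = (2 ^ a * 3 ^ b : ℕ) * (ω : GoldenField) ^ e) : Even a ∧ Even b ∧ Even e := by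
  have he := even_of_sq_eq_natCast_mul_omega_pow (by positivity) h
  obtain ⟨f, rfl⟩ := he
  have hω : (ω : GoldenField) ≠ 0 := fun h0 => by simpa using congrArg im h0
  have hdiv : (x / ω ^ f) ^ 2 = ((2 ^ a * 3 ^ b : ℕ) : GoldenField) := by
    rw [div_pow, h, ← two_mul, mul_comm 2 f, pow_mul, mul_div_cancel_right₀ _ (by positivity)]
  obtain ⟨q, hq⟩ := exists_natCast_eq_sq_of_sq_eq_natCast hdiv
  obtain ⟨ha, hb⟩ := even_and_even_of_two_pow_mul_three_pow_eq hq
  exact ⟨ha, hb, f, rfl⟩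

theorem sq_sqrt_mul_sqrt_mul_sqrt_goldenRatio (a b e : ℕ) : (√2 ^ a * √3 ^ b * √φ ^ e) ^ 2 =
    algebraMap GoldenField ℝ ((2 ^ a * 3 ^ b : ℕ) * (ω : GoldenField) ^ e) := by
  rw [map_mul, map_pow, map_natCast, algebraMap_omega_eq_goldenRatio, mul_pow, mul_pow,
    pow_right_comm √2, pow_right_comm √3, pow_right_comm √φ, Real.sq_sqrt zero_le_two,
    Real.sq_sqrt zero_le_three, Real.sq_sqrt goldenRatio_pos.le]
  push_cast
  rfl

theorem sqrt_monomial_mem_range_iff {a b e : ℕ} :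
    √2 ^ a * √3 ^ b * √φ ^ e ∈ (algebraMap GoldenField ℝ).range ↔ Even a ∧ Even b ∧ Even e := by
  constructor
  · rintro ⟨x, hx⟩
    refine even_of_sq_eq_two_pow_mul_three_pow_mul_omega_pow (x := x) ?_
    refine (algebraMap GoldenField ℝ).injective ?_
    rw [map_pow, hx, sq_sqrt_mul_sqrt_mul_sqrt_goldenRatio]
  · rintro ⟨⟨a, rfl⟩, ⟨b, rfl⟩, ⟨e, rfl⟩⟩
    refine ⟨(2 ^ a * 3 ^ b : ℕ) * (ω : GoldenField) ^ e, ?_⟩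
    rw [← sq_sqrt_mul_sqrt_mul_sqrt_goldenRatio]
    ring

theorem sum_parity_class_eq_zero {ι : Type*} (I : Finset ι) (c : ι → ℤ) (a b e : ι → ℕ)
    (h : ∑ i ∈ I, (c i : ℝ) * (√2 ^ a i * √3 ^ b i * √φ ^ e i) = 0) (i₀ : ι) :
    ∑ i ∈ I with a i % 2 = a i₀ % 2 ∧ b i % 2 = b i₀ % 2 ∧ e i % 2 = e i₀ % 2,
      (c i : ℝ) * (√2 ^ a i * √3 ^ b i * √φ ^ e i) = 0 := by
  classical
  set s : ι → ℝ := fun i => √2 ^ a i * √3 ^ b i * √φ ^ e i with hs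
  have hclass : ∀ i, s i * s i₀ ∈ (algebraMap GoldenField ℝ).range ↔
      a i % 2 = a i₀ % 2 ∧ b i % 2 = b i₀ % 2 ∧ e i % 2 = e i₀ % 2 := fun i => by
    have hmul : s i * s i₀ = √2 ^ (a i + a i₀) * √3 ^ (b i + b i₀) * √φ ^ (e i + e i₀) := by
      simp only [hs]; ring
    simp only [hmul, sqrt_monomial_mem_range_iff, Nat.even_iff]
    omega
  have hsmul : ∀ i, (c i : ℝ) * s i = (c i : GoldenField) • s i := fun i => by
    rw [Algebra.smul_def, map_intCast]
  change ∑ i ∈ I, (c i : ℝ) * s i = 0 at h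
  change ∑ i ∈ I with _, (c i : ℝ) * s i = 0
  simp only [hsmul, ← hclass] at h ⊢
  have : 0 < √φ := Real.sqrt_pos.2 goldenRatio_pos
  exact sum_smul_filter_mul_mem_range_eq_zero (fun i => by positivity)
    (fun i => ⟨_, (sq_sqrt_mul_sqrt_mul_sqrt_goldenRatio _ _ _).symm⟩) h i₀

end GoldenField

section Liouville

open IntermediateField

theorem one_le_prod_norm_embeddings_of_isIntegral {K : Type*} [Field K] [NumberField K] {α : K}
    (hα : IsIntegral ℤ α) (hα0 : α ≠ 0) : 1 ≤ ∏ σ : K →ₐ[ℚ] ℂ, ‖σ α‖ := by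
  obtain ⟨N, hN⟩ := IsIntegrallyClosed.isIntegral_iff.1 (Algebra.isIntegral_norm ℚ hα)
  have hN0 : N ≠ 0 := by
    rintro rfl
    exact hα0 (Algebra.norm_eq_zero_iff.1 (by rw [← hN, map_zero]))
  have hprod : ((N : ℤ) : ℂ) = ∏ σ : K →ₐ[ℚ] ℂ, σ α := by
    rw [← Algebra.norm_eq_prod_embeddings ℚ ℂ α, ← hN, eq_intCast, map_intCast]
  rw [← norm_prod, ← hprod, Complex.norm_intCast]
  exact_mod_cast Int.one_le_abs hN0

theorem one_le_norm_mul_pow_of_isIntegral {K : Type*} [Field K] [NumberField K] {α : K}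
    (hα : IsIntegral ℤ α) (hα0 : α ≠ 0) {H : ℝ} (hH : 1 ≤ H) (hle : ∀ σ : K →ₐ[ℚ] ℂ, ‖σ α‖ ≤ H)
    {d : ℕ} (hd : Module.finrank ℚ K ≤ d + 1) (σ₀ : K →ₐ[ℚ] ℂ) : 1 ≤ ‖σ₀ α‖ * H ^ d := by
  classical
  have hcard : (Finset.univ.erase σ₀).card ≤ d := by
    rw [Finset.card_erase_of_mem (Finset.mem_univ _), Finset.card_univ, AlgHom.card]
    omega
  calc 1 ≤ ∏ σ : K →ₐ[ℚ] ℂ, ‖σ α‖ := one_le_prod_norm_embeddings_of_isIntegral hα hα0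
    _ = ‖σ₀ α‖ * ∏ σ ∈ Finset.univ.erase σ₀, ‖σ α‖ :=
        (Finset.mul_prod_erase _ _ (Finset.mem_univ σ₀)).symm
    _ ≤ ‖σ₀ α‖ * ∏ _σ ∈ Finset.univ.erase σ₀, H := by
        gcongr with σ
        exact hle σ
    _ ≤ ‖σ₀ α‖ * H ^ d := by
        rw [Finset.prod_const]
        gcongr

theorem finrank_adjoin_simple_le_natDegree {K : Type*} [Field K] [Algebra ℚ K] {x : K} {p : ℚ[X]}
    (hp : p.Monic) (hx : aeval x p = 0) : Module.finrank ℚ ℚ⟮x⟯ ≤ p.natDegree := by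
  rw [adjoin.finrank ⟨p, hp, by rwa [← aeval_def]⟩]
  exact natDegree_le_natDegree (minpoly.min ℚ x hp hx)

theorem norm_map_eq_sqrt_of_sq_eq_natCast {K : Type*} [Semiring K] {x : K} {n : ℕ} (hx : x ^ 2 = n)
    (σ : K →+* ℂ) : ‖σ x‖ = √n := by
  rw [eq_comm, Real.sqrt_eq_iff_eq_sq n.cast_nonneg (norm_nonneg _), ← norm_pow, ← map_pow, hx,
    map_natCast, Complex.norm_natCast]

theorem norm_map_le_sqrt_goldenRatio_of_pow_four_eq {K : Type*} [Semiring K] {x : K}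
    (hx : x ^ 4 = x ^ 2 + 1) (σ : K →+* ℂ) : ‖σ x‖ ≤ √φ := by
  refine Real.le_sqrt_of_sq_le ?_
  have h : (‖σ x‖ ^ 2) ^ 2 ≤ ‖σ x‖ ^ 2 + 1 := by
    calc (‖σ x‖ ^ 2) ^ 2 = ‖σ x ^ 2 + 1‖ := by
          rw [← pow_mul, ← norm_pow, ← map_pow, hx, map_add, map_pow, map_one]
      _ ≤ ‖σ x‖ ^ 2 + 1 := by
          rw [← norm_pow]
          exact (norm_add_le _ _).trans_eq (by rw [norm_one])
  by_contra! hlt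
  nlinarith [goldenRatio_sq, one_lt_goldenRatio]

theorem isIntegral_of_pow_four_eq {K : Type*} [CommRing K] {x : K} (hx : x ^ 4 = x ^ 2 + 1) :
    IsIntegral ℤ x := by
  refine ⟨X ^ 4 - (X ^ 2 + C 1), monic_X_pow_sub (by compute_degree!), ?_⟩
  rw [eval₂_sub, eval₂_add, eval₂_X_pow, eval₂_X_pow, eval₂_C, map_one, hx, sub_self]

theorem one_le_norm_sum_monomial_mul_pow {K : Type*} [Field K] [NumberField K] {x y z : K}
    (hx : x ^ 2 = (2 : ℕ)) (hy : y ^ 2 = (3 : ℕ)) (hz : z ^ 4 = z ^ 2 + 1) {d : ℕ}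
    (hd : Module.finrank ℚ K ≤ d + 1) {ι : Type*} (I : Finset ι) (c : ι → ℤ) (a b e : ι → ℕ)
    {H : ℝ} (hH1 : 1 ≤ H) (hH : ∑ i ∈ I, |(c i : ℝ)| * (√2 ^ a i * √3 ^ b i * √φ ^ e i) ≤ H)
    (h0 : ∑ i ∈ I, (c i : K) * (x ^ a i * y ^ b i * z ^ e i) ≠ 0) (σ₀ : K →ₐ[ℚ] ℂ) :
    1 ≤ ‖σ₀ (∑ i ∈ I, (c i : K) * (x ^ a i * y ^ b i * z ^ e i))‖ * H ^ d := by
  have hxint : IsIntegral ℤ x := .of_pow two_pos (hx ▸ isIntegral_natCast 2)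
  have hyint : IsIntegral ℤ y := .of_pow two_pos (hy ▸ isIntegral_natCast 3)
  have hint : IsIntegral ℤ (∑ i ∈ I, (c i : K) * (x ^ a i * y ^ b i * z ^ e i)) :=
    IsIntegral.sum _ fun i _ => (isIntegral_intCast (c i)).mul
      (((hxint.pow _).mul (hyint.pow _)).mul ((isIntegral_of_pow_four_eq hz).pow _))
  refine one_le_norm_mul_pow_of_isIntegral hint h0 hH1 (fun σ => ?_) hd σ₀
  have hσx : ‖σ x‖ = √(2 : ℕ) := norm_map_eq_sqrt_of_sq_eq_natCast hx σ.toRingHom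
  have hσy : ‖σ y‖ = √(3 : ℕ) := norm_map_eq_sqrt_of_sq_eq_natCast hy σ.toRingHom
  have hσz : ‖σ z‖ ≤ √φ := norm_map_le_sqrt_goldenRatio_of_pow_four_eq hz σ.toRingHom
  refine le_trans ?_ hH
  rw [map_sum]
  refine (norm_sum_le _ _).trans (Finset.sum_le_sum fun i _ => ?_)
  simp only [map_mul, map_pow, map_intCast, norm_mul, norm_pow, hσx, hσy, Complex.norm_intCast,
    Nat.cast_ofNat]
  gcongr

/-- The field `ℚ(√2, √3, √φ)`, generated by the square roots of the numbers whose logarithms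
enter the linear form. -/
noncomputable def kummerField : IntermediateField ℚ ℝ := ℚ⟮√2⟯ ⊔ ℚ⟮√3⟯ ⊔ ℚ⟮√φ⟯

theorem sqrt_goldenRatio_pow_four : √φ ^ 4 = √φ ^ 2 + 1 := by
  rw [pow_mul √φ 2 2, Real.sq_sqrt goldenRatio_pos.le, goldenRatio_sq]

theorem finrank_adjoin_sqrt_natCast_le (n : ℕ) : Module.finrank ℚ ℚ⟮√n⟯ ≤ 2 := by
  refine (finrank_adjoin_simple_le_natDegree (p := X ^ 2 - C (n : ℚ))
    (monic_X_pow_sub_C _ two_ne_zero) ?_).trans_eq natDegree_X_pow_sub_C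
  simp

theorem finrank_adjoin_sqrt_goldenRatio_le : Module.finrank ℚ ℚ⟮√φ⟯ ≤ 4 := by
  have hdeg : (X ^ 2 + C 1 : ℚ[X]).degree < 4 := by compute_degree!
  refine (finrank_adjoin_simple_le_natDegree (p := X ^ 4 - (X ^ 2 + C 1))
    (monic_X_pow_sub hdeg) ?_).trans ?_
  · rw [map_sub, map_add, map_pow, map_pow, aeval_X, sqrt_goldenRatio_pow_four, map_one, map_one,
      sub_self]
  · compute_degree

theorem finrank_kummerField_le : Module.finrank ℚ kummerField ≤ 16 :=
  calc Module.finrank ℚ kummerField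
      ≤ Module.finrank ℚ ℚ⟮√2⟯ * Module.finrank ℚ ℚ⟮√3⟯ * Module.finrank ℚ ℚ⟮√φ⟯ :=
        (finrank_sup_le _ _).trans (Nat.mul_le_mul_right _ (finrank_sup_le _ _))
    _ ≤ 2 * 2 * 4 :=
        Nat.mul_le_mul (Nat.mul_le_mul (finrank_adjoin_sqrt_natCast_le 2)
          (finrank_adjoin_sqrt_natCast_le 3)) finrank_adjoin_sqrt_goldenRatio_le

instance numberField_kummerField : NumberField kummerField where
  to_charZero := inferInstance
  to_finiteDimensional := by
    have hsqrt : ∀ n : ℕ, FiniteDimensional ℚ ℚ⟮√n⟯ := fun n =>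
      adjoin.finiteDimensional (.of_pow two_pos (by
        simpa only [Real.sq_sqrt n.cast_nonneg] using isIntegral_natCast n))
    have : FiniteDimensional ℚ ℚ⟮√2⟯ := hsqrt 2
    have : FiniteDimensional ℚ ℚ⟮√3⟯ := hsqrt 3
    have : FiniteDimensional ℚ ℚ⟮√φ⟯ :=
      adjoin.finiteDimensional (isIntegral_of_pow_four_eq sqrt_goldenRatio_pow_four).tower_top
    exact finiteDimensional_sup _ _

theorem liouville_kummerField {ι : Type*} (I : Finset ι) (c : ι → ℤ) (a b e : ι → ℕ) {H : ℝ}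
    (hH1 : 1 ≤ H) (hH : ∑ i ∈ I, |(c i : ℝ)| * (√2 ^ a i * √3 ^ b i * √φ ^ e i) ≤ H)
    (h0 : ∑ i ∈ I, (c i : ℝ) * (√2 ^ a i * √3 ^ b i * √φ ^ e i) ≠ 0) :
    1 ≤ |∑ i ∈ I, (c i : ℝ) * (√2 ^ a i * √3 ^ b i * √φ ^ e i)| * H ^ 15 := by
  have h₂ : ℚ⟮√2⟯ ≤ kummerField := le_sup_left.trans le_sup_left
  have h₃ : ℚ⟮√3⟯ ≤ kummerField := le_sup_right.trans le_sup_left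
  have hφ : ℚ⟮√φ⟯ ≤ kummerField := le_sup_right
  let r₂ : kummerField := ⟨√2, h₂ (mem_adjoin_simple_self ℚ √2)⟩
  let r₃ : kummerField := ⟨√3, h₃ (mem_adjoin_simple_self ℚ √3)⟩
  let rφ : kummerField := ⟨√φ, hφ (mem_adjoin_simple_self ℚ √φ)⟩
  have hval : ((∑ i ∈ I, (c i : kummerField) * (r₂ ^ a i * r₃ ^ b i * rφ ^ e i) :
      kummerField) : ℝ) = ∑ i ∈ I, (c i : ℝ) * (√2 ^ a i * √3 ^ b i * √φ ^ e i) := by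
    simp [r₂, r₃, rφ]
  have hα0 : ∑ i ∈ I, (c i : kummerField) * (r₂ ^ a i * r₃ ^ b i * rφ ^ e i) ≠ 0 := fun h =>
    h0 (by rw [← hval, h]; rfl)
  have hr₂ : r₂ ^ 2 = (2 : ℕ) := Subtype.ext (Real.sq_sqrt zero_le_two)
  have hr₃ : r₃ ^ 2 = (3 : ℕ) := Subtype.ext (Real.sq_sqrt zero_le_three)
  have hrφ : rφ ^ 4 = rφ ^ 2 + 1 := Subtype.ext sqrt_goldenRatio_pow_four
  have := one_le_norm_sum_monomial_mul_pow hr₂ hr₃ hrφ finrank_kummerField_le I c a b e hH1 hH hα0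
    ((Complex.ofRealAm.restrictScalars ℚ).comp kummerField.val)
  rwa [← hval, ← Real.norm_eq_abs, ← Complex.norm_real]

end Liouville

section AuxiliaryFunction

/-- `λ₁ log 2 + λ₂ log 3 + λ₃ log φ`, the exponent in the term of the auxiliary function indexed by
`(λ₁, λ₂, λ₃)`. -/
noncomputable def logForm (l : ℕ × ℕ × ℕ) : ℝ := l.1 * log 2 + l.2.1 * log 3 + l.2.2 * log φ

theorem logForm_nonneg (l : ℕ × ℕ × ℕ) : 0 ≤ logForm l := by
  have : 0 ≤ log φ := log_nonneg one_lt_goldenRatio.le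
  rw [logForm]
  positivity

/-- The linear form in logarithms which is to be bounded from below. -/
noncomputable def linearForm (n x y : ℕ) : ℝ := n * log φ - x * log 2 - y * log 3

/-- `logForm` with `log φ` replaced by its approximation `(x log 2 + y log 3) / n`. -/
noncomputable def approxLogForm (n x y : ℕ) (l : ℕ × ℕ × ℕ) : ℝ :=
  ((n * l.1 + x * l.2.2 : ℕ) * log 2 + (n * l.2.1 + y * l.2.2 : ℕ) * log 3) / n

/-- The monomials which occur in the powers of `approxLogForm n x y l`. -/
def derivMonomial (n x y : ℕ) (l : ℕ × ℕ × ℕ) (k : ℕ × ℕ) : ℕ :=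
  (n * l.1 + x * l.2.2) ^ k.1 * (n * l.2.1 + y * l.2.2) ^ k.2

/-- The polynomial coefficient of the term indexed by `l` in the derivative of order `m` of the
auxiliary function: `m.1` counts differentiations of the coefficient `p`, while `m.2` counts
differentiations of the exponential, with `log φ` eliminated. -/
noncomputable def auxCoeff (n x y : ℕ) (p : ℚ[X]) (l m : ℕ × ℕ × ℕ) : ℚ[X] :=
  derivMonomial n x y l m.2 • hasseDeriv m.1 p

/-- The value at `z` of the derivative of order `m` of the part of the auxiliary function with
coefficients `P` whose exponents are in `C`. -/
noncomputable def auxSum (n x y : ℕ) (P : ℕ × ℕ × ℕ → ℚ[X]) (C : Finset (ℕ × ℕ × ℕ))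
    (m : ℕ × ℕ × ℕ) (z : ℚ) : ℝ :=
  ∑ l ∈ C, ((auxCoeff n x y (P l) l m).eval z : ℚ) * exp (z * logForm l)

/-- The part of the auxiliary function with exponents in `C` vanishes to order `T` at the points
`u / 2 ^ J < S` with `u` odd. -/
def AuxVanishes (n x y : ℕ) (P : ℕ × ℕ × ℕ → ℚ[X]) (C : Finset (ℕ × ℕ × ℕ)) (T J S : ℕ) : Prop :=
  ∀ m : ℕ × ℕ × ℕ, m.1 + m.2.1 + m.2.2 < T → ∀ u : ℕ, Odd u → u < 2 ^ J * S →
    auxSum n x y P C m (u / 2 ^ J) = 0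

variable {n x y : ℕ} {P : ℕ × ℕ × ℕ → ℚ[X]} {C : Finset (ℕ × ℕ × ℕ)} {T J S : ℕ}

theorem approxLogForm_add (hn : n ≠ 0) (l : ℕ × ℕ × ℕ) :
    approxLogForm n x y l + l.2.2 * linearForm n x y / n = logForm l := by
  have : (n : ℝ) ≠ 0 := by exact_mod_cast hn
  rw [approxLogForm, linearForm, logForm]
  push_cast
  field

theorem derivMonomial_mul_approxLogForm_pow (l : ℕ × ℕ × ℕ) (k : ℕ × ℕ) (j : ℕ) :
    derivMonomial n x y l k * approxLogForm n x y l ^ j =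
      ∑ b ∈ Finset.range (j + 1), j.choose b * log 2 ^ b * log 3 ^ (j - b) / n ^ j *
        derivMonomial n x y l (k.1 + b, k.2 + (j - b)) := by
  rw [approxLogForm, div_pow, add_pow, Finset.sum_div, Finset.mul_sum]
  refine Finset.sum_congr rfl fun b _ => ?_
  simp only [derivMonomial, Nat.cast_mul, Nat.cast_pow]
  ring

theorem hasseDeriv_auxCoeff (p : ℚ[X]) (l m : ℕ × ℕ × ℕ) (i : ℕ) :
    hasseDeriv i (auxCoeff n x y p l m) =
      (derivMonomial n x y l m.2 * (i + m.1).choose i) • hasseDeriv (i + m.1) p := by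
  rw [auxCoeff, map_nsmul, mul_smul]
  exact congrArg _ (LinearMap.congr_fun (hasseDeriv_comp i m.1) p)

theorem sum_hasseDeriv_auxCoeff_eq_zero {m : ℕ × ℕ × ℕ} {z : ℚ} {i j : ℕ}
    (h : ∀ b ≤ j, auxSum n x y P C (i + m.1, m.2.1 + b, m.2.2 + (j - b)) z = 0) :
    ∑ l ∈ C, ((hasseDeriv i (auxCoeff n x y (P l) l m)).eval z : ℚ) * approxLogForm n x y l ^ j *
      exp (z * logForm l) = 0 := by
  have hcomb : ∑ b ∈ Finset.range (j + 1), (i + m.1).choose i *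
      (j.choose b * log 2 ^ b * log 3 ^ (j - b) / n ^ j) *
        auxSum n x y P C (i + m.1, m.2.1 + b, m.2.2 + (j - b)) z = 0 :=
    Finset.sum_eq_zero fun b hb => by rw [h b (Finset.mem_range_succ_iff.1 hb), mul_zero]
  rw [← hcomb]
  simp only [auxSum, Finset.mul_sum]
  rw [Finset.sum_comm]
  refine Finset.sum_congr rfl fun l _ => ?_
  have hexpand := derivMonomial_mul_approxLogForm_pow (n := n) (x := x) (y := y) l m.2 j
  rw [hasseDeriv_auxCoeff, eval_smul, nsmul_eq_mul]
  push_cast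
  calc _ = ((i + m.1).choose i * ((hasseDeriv (i + m.1) (P l)).eval z : ℚ) *
        exp (z * logForm l)) * (derivMonomial n x y l m.2 * approxLogForm n x y l ^ j) := by ring
    _ = _ := by
      rw [hexpand, Finset.mul_sum]
      refine Finset.sum_congr rfl fun b _ => ?_
      rw [auxCoeff, eval_smul, nsmul_eq_mul]
      push_cast
      ring

theorem eval_map_algebraMap_ratCast (p : ℚ[X]) (q : ℚ) :
    (p.map (algebraMap ℚ ℂ)).eval (q : ℂ) = ((p.eval q : ℚ) : ℝ) := by
  simpa using eval_map_apply (algebraMap ℚ ℂ) (p := p) q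

theorem node_two_mul_eq (hS : S ≠ 0) (k : ℕ) :
    node (2 * S : ℕ) (2 ^ J * S) k = (((2 * k + 1 : ℕ) / 2 ^ J : ℚ) : ℝ) := by
  rw [node]
  push_cast
  field

theorem abs_auxSum_le (hn : n ≠ 0) (hS : S ≠ 0) (h : AuxVanishes n x y P C T J (2 * S))
    {m : ℕ × ℕ × ℕ} {μ : ℕ} (hm : m.1 + m.2.1 + m.2.2 + μ ≤ T) {ρ w B ε M : ℝ} (hρ : 1 < ρ)
    (hB : 0 ≤ B) (hw : 0 ≤ w)
    (hcoeff : ∀ l ∈ C, ∀ z : ℂ, ‖z‖ ≤ ρ * (2 * S : ℕ) →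
      ‖((auxCoeff n x y (P l) l m).map (algebraMap ℚ ℂ)).eval z‖ ≤ B)
    (hlog : ∀ l ∈ C, logForm l ≤ w) (hlin : ∀ l ∈ C, |l.2.2 * linearForm n x y / n| ≤ ε)
    (hM : (2 ^ J * S : ℕ) * (2 * S : ℕ) *
      (1 + 2 * (2 * exp 1 * (ρ + 1)) ^ (2 ^ J * S)) ^ (2 * μ) + ρ * (2 * S : ℕ) ≤ M)
    (hε : ε * M ≤ 1) {t : ℚ} (ht : (t : ℝ) ∈ Set.Icc 0 ((2 * S : ℕ) : ℝ)) :
    |auxSum n x y P C m t| ≤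
      C.card * B * (exp (w * (2 * S : ℕ) * (1 + ρ) / 2 + 1) *
        (1 / (2 * (ρ - 1))) ^ (2 ^ J * S * μ) + exp (w * (2 * S : ℕ)) * (2 * (ε * M))) := by
  set Q : ℕ × ℕ × ℕ → ℂ[X] := fun l => (auxCoeff n x y (P l) l m).map (algebraMap ℚ ℂ)
  have hsum (l : ℕ × ℕ × ℕ) : (approxLogForm n x y l : ℂ) +
      (l.2.2 * linearForm n x y / n : ℝ) = logForm l := by
    rw [← Complex.ofReal_add, approxLogForm_add hn]
  have hvanish : ∀ k < 2 ^ J * S, ∀ i j, i + j < μ → ∑ l ∈ C,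
      (hasseDeriv i (Q l)).eval (node (2 * S : ℕ) (2 ^ J * S) k : ℂ) *
        (approxLogForm n x y l : ℂ) ^ j * Complex.exp (node (2 * S : ℕ) (2 ^ J * S) k *
          (approxLogForm n x y l + (l.2.2 * linearForm n x y / n : ℝ))) = 0 := by
    intro k hk i j hij
    have hder := sum_hasseDeriv_auxCoeff_eq_zero (m := m) (i := i) (j := j) fun b hb =>
      h (i + m.1, m.2.1 + b, m.2.2 + (j - b)) (by dsimp only; omega) (2 * k + 1) ⟨k, rfl⟩
        (by rw [mul_left_comm]; omega)
    rw [← Complex.ofReal_eq_zero] at hder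
    simp only [hsum, Q, hasseDeriv_map, node_two_mul_eq hS, Complex.ofReal_ratCast,
      eval_map_algebraMap_ratCast]
    exact_mod_cast hder
  have hbound := norm_sum_eval_mul_exp_le (M := M) (by positivity) (by positivity) hρ hB hw hvanish
    hcoeff (fun l hl => by rw [approxLogForm_add hn]; exact ⟨logForm_nonneg l, hlog l hl⟩) hlin hM
    hε ht
  rw [← Real.norm_eq_abs, ← Complex.norm_real]
  convert hbound using 2
  simp only [hsum, auxSum, Q, Complex.ofReal_ratCast, eval_map_algebraMap_ratCast]
  push_cast
  rfl

end AuxiliaryFunction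

section ResidueClasses

/-- The elements of `I` congruent to `l₀` modulo `2 ^ J` in each coordinate. -/
def residueClass (I : Finset (ℕ × ℕ × ℕ)) (l₀ : ℕ × ℕ × ℕ) (J : ℕ) : Finset (ℕ × ℕ × ℕ) :=
  {l ∈ I | l.1 % 2 ^ J = l₀.1 % 2 ^ J ∧ l.2.1 % 2 ^ J = l₀.2.1 % 2 ^ J ∧
    l.2.2 % 2 ^ J = l₀.2.2 % 2 ^ J}

theorem residueClass_subset (I : Finset (ℕ × ℕ × ℕ)) (l₀ : ℕ × ℕ × ℕ) (J : ℕ) :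
    residueClass I l₀ J ⊆ I := Finset.filter_subset _ _

theorem residueClass_zero (I : Finset (ℕ × ℕ × ℕ)) (l₀ : ℕ × ℕ × ℕ) : residueClass I l₀ 0 = I := by
  simp [residueClass, Nat.mod_one]

theorem mod_two_pow_succ_eq_iff {a b J : ℕ} : a % 2 ^ (J + 1) = b % 2 ^ (J + 1) ↔
    a % 2 ^ J = b % 2 ^ J ∧ a / 2 ^ J % 2 = b / 2 ^ J % 2 := by
  refine ⟨fun h => ?_, fun ⟨hmod, hdiv⟩ => by
    rw [Nat.mod_pow_succ, Nat.mod_pow_succ, hmod, hdiv]⟩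
  have hmod : a % 2 ^ J = b % 2 ^ J := Nat.ModEq.of_dvd (pow_dvd_pow 2 J.le_succ) h
  rw [Nat.mod_pow_succ, Nat.mod_pow_succ, hmod] at h
  exact ⟨hmod, Nat.eq_of_mul_eq_mul_left (by positivity) (Nat.add_left_cancel h)⟩

theorem odd_mul_mod_two {u : ℕ} (hu : Odd u) (a : ℕ) : u * a % 2 = a % 2 := by
  simp [Nat.mul_mod, Nat.odd_iff.1 hu]

theorem residueClass_succ (I : Finset (ℕ × ℕ × ℕ)) (l₀ : ℕ × ℕ × ℕ) (J : ℕ) {u : ℕ} (hu : Odd u) :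
    residueClass I l₀ (J + 1) = {l ∈ residueClass I l₀ J |
      u * (l.1 / 2 ^ J) % 2 = u * (l₀.1 / 2 ^ J) % 2 ∧
      u * (l.2.1 / 2 ^ J) % 2 = u * (l₀.2.1 / 2 ^ J) % 2 ∧
      u * (l.2.2 / 2 ^ J) % 2 = u * (l₀.2.2 / 2 ^ J) % 2} := by
  ext l
  simp only [residueClass, Finset.mem_filter, mod_two_pow_succ_eq_iff, odd_mul_mod_two hu]
  tauto

/-- What remains of `exp (u / 2 ^ (J + 1) * logForm l)` when a factor depending only on the class
of `l` modulo `2 ^ J` is removed. -/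
noncomputable def sqrtMonomial (u J : ℕ) (l : ℕ × ℕ × ℕ) : ℝ :=
  √2 ^ (u * (l.1 / 2 ^ J)) * √3 ^ (u * (l.2.1 / 2 ^ J)) * √φ ^ (u * (l.2.2 / 2 ^ J))

theorem sqrtMonomial_pos (u J : ℕ) (l : ℕ × ℕ × ℕ) : 0 < sqrtMonomial u J l := by
  have := goldenRatio_pos
  rw [sqrtMonomial]
  positivity

theorem sqrt_pow_eq_exp {r : ℝ} (hr : 0 < r) (a : ℕ) : √r ^ a = exp (a / 2 * log r) := by
  rw [div_mul_comm, mul_comm, exp_nat_mul, exp_half, exp_log hr]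

variable {I : Finset (ℕ × ℕ × ℕ)} {l₀ : ℕ × ℕ × ℕ} {J : ℕ}

theorem exp_mul_logForm {l : ℕ × ℕ × ℕ} (hl : l ∈ residueClass I l₀ J) (u : ℕ) :
    exp ((u / 2 ^ (J + 1) : ℚ) * logForm l) =
      exp ((u / 2 ^ (J + 1) : ℚ) * logForm (l₀.1 % 2 ^ J, l₀.2.1 % 2 ^ J, l₀.2.2 % 2 ^ J)) *
        sqrtMonomial u J l := by
  obtain ⟨-, h₁, h₂, h₃⟩ := Finset.mem_filter.1 hl
  have hdiv : ∀ a b : ℕ, a % 2 ^ J = b → (a : ℝ) = b + 2 ^ J * (a / 2 ^ J : ℕ) := by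
    rintro a b rfl
    exact_mod_cast (Nat.mod_add_div a (2 ^ J)).symm
  rw [sqrtMonomial, sqrt_pow_eq_exp two_pos, sqrt_pow_eq_exp three_pos,
    sqrt_pow_eq_exp goldenRatio_pos, ← exp_add, ← exp_add, ← exp_add, logForm, logForm,
    hdiv _ _ h₁, hdiv _ _ h₂, hdiv _ _ h₃]
  congr 1
  push_cast
  field

variable {n x y : ℕ} {P : ℕ × ℕ × ℕ → ℚ[X]} {m : ℕ × ℕ × ℕ} {u D : ℕ}

theorem mul_auxSum_eq_mul_sum_sqrtMonomial {c : ℕ × ℕ × ℕ → ℤ} {C : Finset (ℕ × ℕ × ℕ)}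
    (hC : C ⊆ residueClass I l₀ J)
    (hc : ∀ l ∈ C, D * (auxCoeff n x y (P l) l m).eval (u / 2 ^ (J + 1) : ℚ) = c l) :
    D * auxSum n x y P C m (u / 2 ^ (J + 1)) =
      exp ((u / 2 ^ (J + 1) : ℚ) * logForm (l₀.1 % 2 ^ J, l₀.2.1 % 2 ^ J, l₀.2.2 % 2 ^ J)) *
        ∑ l ∈ C, c l * sqrtMonomial u J l := by
  rw [auxSum, Finset.mul_sum, Finset.mul_sum]
  refine Finset.sum_congr rfl fun l hl => ?_
  have hcl : (D : ℝ) * ((auxCoeff n x y (P l) l m).eval (u / 2 ^ (J + 1) : ℚ) : ℚ) = c l := by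
    exact_mod_cast hc l hl
  rw [exp_mul_logForm (hC hl), ← hcl]
  ring

/- The value of the sum over a class modulo `2 ^ J` is, up to a factor, an algebraic integer of
`kummerField`, so it vanishes as soon as it is small; by Kummer theory the sum over each class
modulo `2 ^ (J + 1)` then vanishes as well. -/
theorem auxSum_residueClass_succ_eq_zero (hu : Odd u) (hD : D ≠ 0)
    (hint : ∀ l ∈ I, ∃ c : ℤ, D * (hasseDeriv m.1 (P l)).eval (u / 2 ^ (J + 1) : ℚ) = c)
    {H : ℝ} (hH1 : 1 ≤ H)
    (hH : ∑ l ∈ residueClass I l₀ J, D * |(((auxCoeff n x y (P l) l m).eval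
      (u / 2 ^ (J + 1) : ℚ) : ℚ) : ℝ)| * exp ((u / 2 ^ (J + 1) : ℚ) * logForm l) ≤ H)
    (hsmall : D * |auxSum n x y P (residueClass I l₀ J) m (u / 2 ^ (J + 1))| * H ^ 15 < 1) :
    auxSum n x y P (residueClass I l₀ (J + 1)) m (u / 2 ^ (J + 1)) = 0 := by
  set z : ℚ := u / 2 ^ (J + 1)
  set E := exp (z * logForm (l₀.1 % 2 ^ J, l₀.2.1 % 2 ^ J, l₀.2.2 % 2 ^ J))
  have hE1 : 1 ≤ E := one_le_exp (mul_nonneg (by positivity) (logForm_nonneg _))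
  obtain ⟨c, hc⟩ : ∃ c : ℕ × ℕ × ℕ → ℤ, ∀ l ∈ residueClass I l₀ J,
      D * (auxCoeff n x y (P l) l m).eval z = c l := by
    choose! c hc using hint
    refine ⟨fun l => derivMonomial n x y l m.2 * c l, fun l hl => ?_⟩
    rw [Int.cast_mul, ← hc l (residueClass_subset _ _ _ hl), auxCoeff, eval_smul, nsmul_eq_mul,
      Int.cast_natCast, mul_left_comm]
  have hsum : ∑ l ∈ residueClass I l₀ J, (c l : ℝ) * sqrtMonomial u J l = 0 := by
    by_contra hne
    refine absurd ((liouville_kummerField _ c _ _ _ hH1 (hH.trans' ?_) hne).trans ?_)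
      (not_le.2 hsmall)
    · refine Finset.sum_le_sum fun l hl => ?_
      have hcl : (D : ℝ) * |(((auxCoeff n x y (P l) l m).eval z : ℚ) : ℝ)| = |(c l : ℝ)| := by
        rw [← Rat.cast_intCast, ← hc l hl, Rat.cast_mul, abs_mul, Rat.cast_natCast, Nat.abs_cast]
      rw [hcl, exp_mul_logForm hl]
      exact mul_le_mul_of_nonneg_left
        (le_mul_of_one_le_left (sqrtMonomial_pos u J l).le hE1) (abs_nonneg _)
    · gcongr
      rw [← Nat.abs_cast D, ← abs_mul, mul_auxSum_eq_mul_sum_sqrtMonomial subset_rfl hc, abs_mul,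
        abs_exp]
      exact le_mul_of_one_le_left (abs_nonneg _) hE1
  have hparity := sum_parity_class_eq_zero _ c _ _ _ hsum l₀
  rw [← residueClass_succ I l₀ J hu] at hparity
  have hsub : residueClass I l₀ (J + 1) ⊆ residueClass I l₀ J := by
    rw [residueClass_succ I l₀ J hu]
    exact Finset.filter_subset _ _
  have hmul := mul_auxSum_eq_mul_sum_sqrtMonomial hsub fun l hl => hc l (hsub hl)
  have hclass : ∑ l ∈ residueClass I l₀ (J + 1), (c l : ℝ) * sqrtMonomial u J l = 0 := hparity
  rw [hclass, mul_zero] at hmul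
  exact (mul_eq_zero.1 hmul).resolve_left (by exact_mod_cast hD)

end ResidueClasses

section Siegel

theorem exists_int_solution_abs_le_rpow {α β : Type*} (R : Finset α) (Q : Finset β) (A : α → β → ℤ)
    {a : ℝ} (ha : 1 ≤ a) (hA : ∀ i ∈ R, ∀ j ∈ Q, |(A i j : ℝ)| ≤ a) (hR : R.Nonempty) {k : ℕ}
    (hk : k ≠ 0) (hcard : (k + 1) * R.card ≤ Q.card) :
    ∃ t : β → ℤ, (∃ j ∈ Q, t j ≠ 0) ∧ (∀ i ∈ R, ∑ j ∈ Q, A i j * t j = 0) ∧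
      ∀ j, |(t j : ℝ)| ≤ (Q.card * a) ^ (1 / k : ℝ) := by
  let : SeminormedAddCommGroup (Matrix R Q ℤ) := Matrix.seminormedAddCommGroup
  have hk1 : 1 ≤ (k : ℝ) := by exact_mod_cast Nat.one_le_iff_ne_zero.2 hk
  have hR1 : 1 ≤ (R.card : ℝ) := by exact_mod_cast hR.card_pos
  have hcard' : (k + 1) * (R.card : ℝ) ≤ Q.card := by exact_mod_cast hcard
  have hRQ : (R.card : ℝ) < Q.card := by nlinarith
  obtain ⟨t, ht, hAt, hbound⟩ := Int.Matrix.exists_ne_zero_int_vec_norm_le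
    (Matrix.of fun (i : R) (j : Q) => A i j) (by simpa using hRQ) (by simpa using hR.card_pos)
  simp only [Fintype.card_coe] at hbound
  have hext (j : Q) : Function.extend Subtype.val t 0 j.1 = t j :=
    Subtype.val_injective.extend_apply t 0 j
  have hnorm : max 1 ‖Matrix.of fun (i : R) (j : Q) => A i j‖ ≤ a :=
    max_le ha ((Matrix.norm_le_iff (by linarith)).2 fun i j => hA i i.2 j j.2)
  have hexp : (R.card : ℝ) / (Q.card - R.card) ≤ 1 / k := by
    rw [div_le_div_iff₀ (by linarith) (by linarith)]
    linarith
  have ht_le (j : Q) : |(t j : ℝ)| ≤ (Q.card * a) ^ (1 / k : ℝ) :=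
    calc |(t j : ℝ)| ≤ ‖t‖ := norm_le_pi_norm t j
      _ ≤ _ := hbound
      _ ≤ (Q.card * a) ^ ((R.card : ℝ) / (Q.card - R.card)) := by
        have : 0 ≤ (R.card : ℝ) / (Q.card - R.card) := div_nonneg (by linarith) (by linarith)
        gcongr
      _ ≤ _ := rpow_le_rpow_of_exponent_le (by nlinarith) hexp
  refine ⟨Function.extend Subtype.val t 0, ?_, fun i hi => ?_, fun j => ?_⟩
  · obtain ⟨j, hj⟩ := Function.ne_iff.1 ht
    exact ⟨j, j.2, by rwa [hext]⟩
  · rw [← Finset.sum_coe_sort]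
    simp only [hext]
    exact congrFun hAt ⟨i, hi⟩
  · by_cases hj : j ∈ Q
    · rw [hext ⟨j, hj⟩]
      exact ht_le _
    · rw [Function.extend_apply' _ _ _ (by simpa using hj), Pi.zero_apply, Int.cast_zero, abs_zero]
      positivity

/-- The orders of differentiation of total order less than `T`. -/
def ordersLT (T : ℕ) : Finset (ℕ × ℕ × ℕ) :=
  {m ∈ Finset.range T ×ˢ Finset.range T ×ˢ Finset.range T | m.1 + m.2.1 + m.2.2 < T}

theorem mem_ordersLT {T : ℕ} {m : ℕ × ℕ × ℕ} : m ∈ ordersLT T ↔ m.1 + m.2.1 + m.2.2 < T := by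
  simp only [ordersLT, Finset.mem_filter, Finset.mem_product, Finset.mem_range]
  omega

theorem six_mul_card_ordersLT_le (T : ℕ) : 6 * (ordersLT T).card ≤ T * (T + 1) * (T + 2) := by
  cases T with
  | zero => simp [ordersLT]
  | succ t =>
    have hsub : ordersLT (t + 1) ⊆ ((Finset.univ : Finset (Fin 4)).finsuppAntidiag t).image
        fun f => (f 0, f 1, f 2) := fun m hm => by
      have hm := mem_ordersLT.1 hm
      refine Finset.mem_image.2 ⟨Finsupp.equivFunOnFinite.symm
        ![m.1, m.2.1, m.2.2, t - (m.1 + m.2.1 + m.2.2)], ?_, by simp⟩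
      simp [Finset.mem_finsuppAntidiag, Fin.sum_univ_four]
      omega
    have hcard := (Finset.card_le_card hsub).trans Finset.card_image_le
    rw [Finset.card_finsuppAntidiag_nat_eq_choose, Finset.card_univ, Fintype.card_fin,
      show 4 + t - 1 = t + 3 by omega, Nat.choose_symm_add] at hcard
    refine (Nat.mul_le_mul_left 6 hcard).trans_eq ?_
    rw [show 6 = Nat.factorial 3 from rfl, ← Nat.descFactorial_eq_factorial_mul_choose]
    simp only [Nat.descFactorial_succ, Nat.descFactorial_zero, mul_one,
      Nat.reduceSubDiff, Nat.sub_zero]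
    ring_nf

/-- The coordinates of `φ ^ e` in the basis `φ, 1` of `ℤ[φ]`. -/
def goldenCoord (e : ℕ) : Fin 2 → ℕ := ![Nat.fib e, Nat.fib (e + 1) - Nat.fib e]

theorem goldenCoord_add (e : ℕ) : goldenCoord e 0 * φ + goldenCoord e 1 = φ ^ e := by
  rw [goldenCoord, Matrix.cons_val_zero, Matrix.cons_val_one, Matrix.cons_val_zero,
    Nat.cast_sub Nat.fib_le_fib_succ]
  cases e with
  | zero => simp
  | succ e =>
    rw [← goldenRatio_mul_fib_succ_add_fib, Nat.fib_add_two]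
    push_cast
    ring

theorem goldenCoord_le (e : ℕ) (b : Fin 2) : goldenCoord e b ≤ φ ^ e := by
  have : (0 : ℝ) ≤ goldenCoord e 0 := Nat.cast_nonneg _
  have : (0 : ℝ) ≤ goldenCoord e 1 := Nat.cast_nonneg _
  have := goldenCoord_add e
  have := one_lt_goldenRatio
  fin_cases b
  · simp only [Fin.zero_eta]
    nlinarith
  · simp only [Fin.mk_one]
    nlinarith

variable {n x y : ℕ}

theorem exp_natCast_mul_logForm (u : ℕ) (l : ℕ × ℕ × ℕ) :
    exp (u * logForm l) = 2 ^ (u * l.1) * 3 ^ (u * l.2.1) * φ ^ (u * l.2.2) := by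
  have hpow {r : ℝ} (hr : 0 < r) (a : ℕ) : r ^ a = exp (a * log r) := by
    rw [exp_nat_mul, exp_log hr]
  rw [hpow two_pos, hpow three_pos, hpow goldenRatio_pos, ← exp_add, ← exp_add, logForm]
  congr 1
  push_cast
  ring

/-- The coordinates of `derivMonomial n x y l k * exp (u * logForm l)` in the basis `φ, 1`. -/
def termCoord (n x y u : ℕ) (l : ℕ × ℕ × ℕ) (k : ℕ × ℕ) (b : Fin 2) : ℕ :=
  derivMonomial n x y l k * (2 ^ (u * l.1) * 3 ^ (u * l.2.1) * goldenCoord (u * l.2.2) b)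

theorem termCoord_add (u : ℕ) (l : ℕ × ℕ × ℕ) (k : ℕ × ℕ) :
    termCoord n x y u l k 0 * φ + termCoord n x y u l k 1 =
      derivMonomial n x y l k * exp (u * logForm l) := by
  rw [exp_natCast_mul_logForm, ← goldenCoord_add, termCoord, termCoord]
  push_cast
  ring

theorem termCoord_le (u : ℕ) (l : ℕ × ℕ × ℕ) (k : ℕ × ℕ) (b : Fin 2) :
    termCoord n x y u l k b ≤ derivMonomial n x y l k * exp (u * logForm l) := by
  rw [exp_natCast_mul_logForm, termCoord]
  push_cast
  gcongr
  exact goldenCoord_le _ b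

variable {h N D u : ℕ} {I : Finset (ℕ × ℕ × ℕ)} {m : ℕ × ℕ × ℕ}

theorem mul_auxSum_auxPoly_eq {c : ℕ → ℤ}
    (hc : ∀ i < N, D * (hasseDeriv m.1 (feldmanPoly h i)).eval (u : ℚ) = c i)
    (p : ℕ × ℕ × ℕ → ℕ → ℤ) :
    D * auxSum n x y (fun l => auxPoly h N (p l)) I m u =
      (∑ q ∈ I ×ˢ Finset.range N, c q.2 * termCoord n x y u q.1 m.2 0 * p q.1 q.2 : ℤ) * φ +
        (∑ q ∈ I ×ˢ Finset.range N, c q.2 * termCoord n x y u q.1 m.2 1 * p q.1 q.2 : ℤ) := by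
  rw [Finset.sum_product, Finset.sum_product, auxSum]
  push_cast
  rw [Finset.mul_sum, Finset.sum_mul, ← Finset.sum_add_distrib]
  refine Finset.sum_congr rfl fun l _ => ?_
  rw [Finset.sum_mul, ← Finset.sum_add_distrib, auxCoeff, auxPoly, map_sum, eval_smul,
    eval_finsetSum, nsmul_eq_mul, Rat.cast_mul, Rat.cast_sum, Finset.mul_sum, Finset.sum_mul,
    Finset.mul_sum]
  refine Finset.sum_congr rfl fun i hi => ?_
  have hci : (D : ℝ) * ((hasseDeriv m.1 (feldmanPoly h i)).eval (u : ℚ) : ℚ) = c i := by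
    exact_mod_cast hc i (Finset.mem_range.1 hi)
  rw [map_smul, eval_smul, smul_eq_mul, ← hci]
  have := termCoord_add (n := n) (x := x) (y := y) u l m.2
  push_cast
  linear_combination -((D : ℝ) * p l i *
    ((hasseDeriv m.1 (feldmanPoly h i)).eval (u : ℚ) : ℚ)) * this

/- The vanishing conditions at the points `u / 2 ^ 0` are linear equations over `ℤ[φ]`, hence twice
as many over `ℤ`. -/
theorem exists_auxVanishes {T S : ℕ} (hT : T ≠ 0) (hS : S ≠ 0) (hD : D ≠ 0) {A : ℝ} (hA1 : 1 ≤ A)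
    (hint : ∀ m < T, ∀ i < N, ∀ u : ℕ, ∃ c : ℤ,
      D * (hasseDeriv m (feldmanPoly h i)).eval (u : ℚ) = c)
    (hA : ∀ m : ℕ × ℕ × ℕ, m.1 + m.2.1 + m.2.2 < T → ∀ l ∈ I, ∀ i < N, ∀ u < 2 * S,
      D * |(((hasseDeriv m.1 (feldmanPoly h i)).eval (u : ℚ) : ℚ) : ℝ)| *
        (derivMonomial n x y l m.2 * exp (u * logForm l)) ≤ A)
    (hcard : 2 * S * (T * (T + 1) * (T + 2)) ≤ I.card * N) :
    ∃ p : ℕ × ℕ × ℕ → ℕ → ℤ, (∃ l ∈ I, ∃ i < N, p l i ≠ 0) ∧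
      (∀ l i, |(p l i : ℝ)| ≤ (I.card * N * A) ^ (1 / 5 : ℝ)) ∧
      AuxVanishes n x y (fun l => auxPoly h N (p l)) I T 0 (2 * S) := by
  choose! c hc using hint
  set R := ordersLT T ×ˢ Finset.range S ×ˢ (Finset.univ : Finset (Fin 2))
  set Q := I ×ˢ Finset.range N
  have hentry : ∀ r ∈ R, ∀ q ∈ Q, |((c r.1.1 q.2 (2 * r.2.1 + 1) *
      termCoord n x y (2 * r.2.1 + 1) q.1 r.1.2 r.2.2 : ℤ) : ℝ)| ≤ A := by
    rintro ⟨m, v, b⟩ hr ⟨l, i⟩ hq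
    simp only [R, Q, Finset.mem_product, Finset.mem_range, mem_ordersLT] at hr hq
    have hcmi : (D : ℝ) * |(((hasseDeriv m.1 (feldmanPoly h i)).eval
        ((2 * v + 1 : ℕ) : ℚ) : ℚ) : ℝ)| = |(c m.1 i (2 * v + 1) : ℝ)| := by
      rw [← Nat.abs_cast D, ← abs_mul]
      exact_mod_cast congrArg (fun q : ℚ => |(q : ℝ)|) (hc m.1 (by omega) i hq.2 (2 * v + 1))
    refine le_trans ?_ (hA m hr.1 l hq.1 i hq.2 (2 * v + 1) (by omega))
    rw [hcmi, Int.cast_mul, abs_mul, Int.cast_natCast, Nat.abs_cast]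
    exact mul_le_mul_of_nonneg_left (termCoord_le _ _ _ _) (abs_nonneg _)
  have hRQ : (5 + 1) * R.card ≤ Q.card := by
    simp only [R, Q, Finset.card_product, Finset.card_range, Finset.card_univ, Fintype.card_fin]
    nlinarith [Nat.mul_le_mul_left (2 * S) (six_mul_card_ordersLT_le T)]
  have hR0 : R.Nonempty := ⟨(0, 0, 0), by
    simp [R, mem_ordersLT, Nat.pos_of_ne_zero hT, Nat.pos_of_ne_zero hS]⟩
  obtain ⟨t, ⟨q, hq, htq⟩, htR, ht⟩ :=
    exists_int_solution_abs_le_rpow R Q _ hA1 hentry hR0 (by norm_num) hRQ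
  refine ⟨fun l i => t (l, i), ⟨q.1, (Finset.mem_product.1 hq).1, q.2,
    Finset.mem_range.1 (Finset.mem_product.1 hq).2, htq⟩, fun l i => ?_, ?_⟩
  · simpa [Q] using ht (l, i)
  · rintro m hm u ⟨v, rfl⟩ hv
    rw [pow_zero, one_mul] at hv
    have hrow (b : Fin 2) := htR (m, v, b) (by simp [R, mem_ordersLT, hm]; omega)
    have hzero := mul_auxSum_auxPoly_eq (n := n) (x := x) (y := y) (I := I)
      (fun i hi => hc m.1 (by omega) i hi (2 * v + 1)) fun l i => t (l, i)
    rw [hrow 0, hrow 1, Int.cast_zero, zero_mul, zero_add] at hzero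
    rw [pow_zero, div_one]
    exact (mul_eq_zero.1 hzero).resolve_left (by exact_mod_cast hD)

end Siegel

section ParameterBounds

theorem le_exp_of_pow_le {a : ℝ} {p q : ℕ} (hq : q ≠ 0) (h : a ^ q ≤ 2.718281828 ^ p) :
    a ≤ exp (p / q) := by
  refine le_of_pow_le_pow_left₀ hq (exp_pos _).le (h.trans ?_)
  rw [← exp_nat_mul, mul_div_cancel₀ _ (by exact_mod_cast hq), ← exp_one_pow]
  exact pow_le_pow_left₀ (by norm_num) (by linarith [exp_one_gt_d9]) p

theorem two_pow_le_exp (m : ℕ) : (2 : ℝ) ^ m ≤ exp (0.6932 * m) := by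
  rw [mul_comm, exp_nat_mul]
  refine pow_le_pow_left₀ (by norm_num) ?_ m
  rw [← log_le_iff_le_exp (by norm_num)]
  linarith [log_two_lt_d9]

theorem log_goldenRatio_lt : log φ < 0.48125 := by
  have hsqrt : √5 < 2.23606798 := by
    rw [sqrt_lt' (by norm_num)]
    norm_num
  have hexp := le_exp_of_pow_le (a := 1.618034) (p := 77) (q := 160) (by norm_num) (by norm_num)
  rw [log_lt_iff_lt_exp goldenRatio_pos, goldenRatio]
  norm_num at hexp ⊢
  linarith

/-- The set of exponents `(λ₁, λ₂, λ₃)` occurring in the auxiliary function. The sides `2 ^ 25` and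
`23500000` roughly balance the contributions of `log 2`, `log 3` and `log φ`, and all are at most
`2 ^ 25`, so that `25` halvings separate any two exponents. -/
def exponentBox : Finset (ℕ × ℕ × ℕ) :=
  Finset.range (2 ^ 25) ×ˢ Finset.range 23500000 ×ˢ Finset.range (2 ^ 25)

theorem mem_exponentBox {l : ℕ × ℕ × ℕ} :
    l ∈ exponentBox ↔ l.1 < 2 ^ 25 ∧ l.2.1 < 23500000 ∧ l.2.2 < 2 ^ 25 := by
  simp only [exponentBox, Finset.mem_product, Finset.mem_range]

theorem card_exponentBox : exponentBox.card = 2 ^ 25 * (23500000 * 2 ^ 25) := by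
  simp only [exponentBox, Finset.card_product, Finset.card_range]

attribute [irreducible] exponentBox

theorem card_exponentBox_le : exponentBox.card ≤ exp 55 := by
  rw [card_exponentBox]
  refine le_trans ?_ ((two_pow_le_exp 75).trans (exp_le_exp.2 (by norm_num)))
  norm_num

theorem residueClass_exponentBox {l₀ : ℕ × ℕ × ℕ} (h : l₀ ∈ exponentBox) :
    residueClass exponentBox l₀ 25 = {l₀} := by
  have h₀ := mem_exponentBox.1 h
  refine Finset.eq_singleton_iff_unique_mem.2 ⟨by simp [residueClass, h], fun l hl => ?_⟩
  obtain ⟨hl, h₁, h₂, h₃⟩ := Finset.mem_filter.1 hl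
  rw [mem_exponentBox] at hl
  rw [Nat.mod_eq_of_lt (by omega), Nat.mod_eq_of_lt (by omega)] at h₁ h₂ h₃
  exact Prod.ext h₁ (Prod.ext h₂ h₃)

theorem logForm_le_of_mem_exponentBox {l : ℕ × ℕ × ℕ} (hl : l ∈ exponentBox) :
    logForm l ≤ 65300000 := by
  obtain ⟨h₁, h₂, h₃⟩ := mem_exponentBox.1 hl
  have h₁ : (l.1 : ℝ) ≤ 2 ^ 25 := by exact_mod_cast h₁.le
  have h₂ : (l.2.1 : ℝ) ≤ 23500000 := by exact_mod_cast h₂.le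
  have h₃ : (l.2.2 : ℝ) ≤ 2 ^ 25 := by exact_mod_cast h₃.le
  have hφ : 0 ≤ log φ := log_nonneg one_lt_goldenRatio.le
  calc logForm l ≤ 2 ^ 25 * 0.69315 + 23500000 * 1.09862 + 2 ^ 25 * 0.48125 := by
        rw [logForm]
        gcongr
        · linarith [log_two_lt_d9]
        · linarith [log_three_lt_d9]
        · exact log_goldenRatio_lt.le
    _ ≤ 65300000 := by norm_num

variable {h n x y : ℕ}

theorem derivMonomial_le_exp (hh : 5 ≤ h) (hx : x ≤ n) (hy : y ≤ n) (hnh : n ≤ exp (8 * h))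
    {l : ℕ × ℕ × ℕ} (hl : l ∈ exponentBox) {k : ℕ × ℕ} {t : ℕ} (hk : k.1 + k.2 ≤ t) :
    derivMonomial n x y l k ≤ exp (11.61 * t * h) := by
  obtain ⟨h₁, h₂, h₃⟩ := mem_exponentBox.1 hl
  have hh' : (5 : ℝ) ≤ h := by exact_mod_cast hh
  have hbase {u v : ℕ} (hu : u < 2 ^ 25) (hv : v ≤ n) :
      ((n * u + v * l.2.2 : ℕ) : ℝ) ≤ exp (11.61 * h) :=
    calc ((n * u + v * l.2.2 : ℕ) : ℝ) ≤ (n * 2 ^ 25 + n * 2 ^ 25 : ℕ) := by gcongr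
      _ = n * 2 ^ 26 := by push_cast; ring
      _ ≤ exp (8 * h) * exp (0.6932 * (26 : ℕ)) := by
        gcongr
        exact two_pow_le_exp 26
      _ ≤ exp (11.61 * h) := by
        rw [← exp_add, exp_le_exp]
        push_cast
        linarith
  calc (derivMonomial n x y l k : ℝ) ≤ exp (11.61 * h) ^ k.1 * exp (11.61 * h) ^ k.2 := by
        rw [derivMonomial, Nat.cast_mul, Nat.cast_pow, Nat.cast_pow]
        gcongr
        · exact hbase h₁ hx
        · exact hbase (h₂.trans (by norm_num)) hy
    _ = exp (11.61 * h) ^ (k.1 + k.2) := (pow_add _ _ _).symm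
    _ ≤ exp (11.61 * h) ^ t := pow_le_pow_right₀ (one_le_exp (by positivity)) hk
    _ = exp (11.61 * t * h) := by
      rw [← exp_nat_mul]
      ring_nf

/-- The number of coefficients of each of the polynomials in the auxiliary function. -/
def auxLength (h : ℕ) : ℕ := 1640000000 * h

theorem auxLength_le_exp (hh : 5 ≤ h) : auxLength h ≤ exp (6 * h) := by
  have hh' : (5 : ℝ) ≤ h := by exact_mod_cast hh
  have hexp : (1640000000 : ℝ) ≤ exp 25 := by
    simpa using le_exp_of_pow_le (a := 1640000000) (p := 25) (q := 1) (by norm_num) (by norm_num)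
  calc (auxLength h : ℝ) = 1640000000 * h := by simp [auxLength]
    _ ≤ exp 25 * exp h := by
      gcongr
      linarith [add_one_le_exp (h : ℝ)]
    _ ≤ exp (6 * h) := by
      rw [← exp_add, exp_le_exp]
      linarith

theorem norm_hasseDeriv_auxPoly_le_exp (hh : 5 ≤ h) {p : ℕ → ℤ} {B : ℝ}
    (hp : ∀ i < auxLength h, |(p i : ℝ)| ≤ B) (m : ℕ) {r c : ℝ} (hr : 0 ≤ r)
    (hc : r + 1.2 ≤ exp (c - 1)) {z : ℂ} (hz : ‖z‖ ≤ r * h) :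
    ‖((hasseDeriv m (auxPoly h (auxLength h) p)).map (algebraMap ℚ ℂ)).eval z‖ ≤
      B * exp ((6 + c * 1640000000) * h) := by
  have hh' : (5 : ℝ) ≤ h := by exact_mod_cast hh
  have hB : 0 ≤ B := (abs_nonneg _).trans (hp 0 (by rw [auxLength]; omega))
  have hgrowth : exp 1 * (r * h + 1 + h) / h ≤ exp c := by
    rw [div_le_iff₀ (by linarith), show exp c = exp 1 * exp (c - 1) by
      rw [← exp_add, add_sub_cancel], mul_assoc]
    gcongr
    nlinarith
  calc _ ≤ auxLength h * B * (exp 1 * (r * h + 1 + h) / h) ^ auxLength h :=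
        norm_hasseDeriv_auxPoly_le hp m hz
    _ ≤ exp (6 * h) * B * exp c ^ auxLength h := by
      gcongr
      exact auxLength_le_exp hh
    _ = B * exp ((6 + c * 1640000000) * h) := by
      rw [← exp_nat_mul, mul_comm (exp (6 * h)), mul_assoc, ← exp_add, auxLength]
      push_cast
      ring_nf

theorem abs_hasseDeriv_feldmanPoly_le_exp (hh : 5 ≤ h) {i : ℕ} (hi : i < auxLength h) (m : ℕ)
    {u : ℕ} (hu : u ≤ 1024 * h) :
    |(((hasseDeriv m (feldmanPoly h i)).eval (u : ℚ) : ℚ) : ℝ)| ≤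
      exp ((6 + 7.95 * 1640000000) * h) := by
  have hexp := le_exp_of_pow_le (a := 1024 + 1.2) (p := 139) (q := 20) (by norm_num) (by norm_num)
  have hbound := norm_hasseDeriv_auxPoly_le_exp hh (p := Pi.single i 1) (B := 1) (fun j _ => by
      by_cases hj : j = i <;> simp [hj]) m (r := 1024) (c := 7.95) (by norm_num)
    (hexp.trans_eq (by norm_num)) (z := ((u : ℚ) : ℂ)) (by simpa using by exact_mod_cast hu)
  rwa [auxPoly_single h hi, eval_map_algebraMap_ratCast, one_mul, Complex.norm_real,
    Real.norm_eq_abs] at hbound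

/-- A common denominator for the values at the points `a / 2 ^ J` of the Hasse derivatives of order
at most `t` of the polynomials in the auxiliary function. -/
def auxDenom (h J t : ℕ) : ℕ := 2 ^ ((J + 1) * auxLength h) * h.lcmUpto ^ t

theorem auxDenom_ne_zero (h J t : ℕ) : auxDenom h J t ≠ 0 :=
  mul_ne_zero (by positivity) (pow_ne_zero _ (Nat.lcmUpto_pos h).ne')

theorem auxDenom_le_exp (hh : 0 < h) (J t : ℕ) :
    auxDenom h J t ≤ exp ((0.6932 * 1640000000 * (J + 1 : ℕ) + 2.86 * t) * h) :=
  calc (auxDenom h J t : ℝ) = 2 ^ ((J + 1) * auxLength h) * (h.lcmUpto : ℝ) ^ t := by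
        simp [auxDenom]
    _ ≤ exp (0.6932 * ((J + 1) * auxLength h : ℕ)) * exp (2.86 * h) ^ t := by
      gcongr
      · exact two_pow_le_exp _
      · exact lcmUpto_le_exp hh
    _ = _ := by
      rw [← exp_nat_mul, ← exp_add, auxLength]
      push_cast
      ring_nf

theorem exists_int_auxDenom_mul_hasseDeriv (hh : 0 < h) (p : ℕ → ℤ) {m t : ℕ} (hm : m ≤ t)
    (u J : ℕ) : ∃ c : ℤ, auxDenom h J t *
      (hasseDeriv m (auxPoly h (auxLength h) p)).eval (u / 2 ^ J : ℚ) = c := by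
  obtain ⟨c, hc⟩ := exists_int_hasseDeriv_auxPoly hh (d := h.lcmUpto)
    (fun t ht hth => Finset.dvd_lcm (f := id) (Finset.mem_Icc.2 ⟨ht, hth⟩)) (auxLength h) p hm u J
  exact ⟨c, by rw [← hc, auxDenom]; push_cast; rfl⟩

/-- The order to which the auxiliary function vanishes after `J` extrapolation steps. -/
def auxOrder (J : ℕ) : ℕ := 98 * 2 ^ (25 - J)

theorem auxOrder_zero : auxOrder 0 = 3288334336 := by norm_num [auxOrder]

theorem siegel_coeff_le_exp (hh : 5 ≤ h) (hx : x ≤ n) (hy : y ≤ n) (hnh : n ≤ exp (8 * h))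
    {m : ℕ × ℕ × ℕ} (hm : m.2.1 + m.2.2 ≤ auxOrder 0) {l : ℕ × ℕ × ℕ} (hl : l ∈ exponentBox) {i : ℕ}
    (hi : i < auxLength h) {u : ℕ} (hu : u ≤ 1024 * h) :
    auxDenom h 0 (auxOrder 0) * |(((hasseDeriv m.1 (feldmanPoly h i)).eval (u : ℚ) : ℚ) : ℝ)| *
      (derivMonomial n x y l m.2 * exp (u * logForm l)) ≤ exp (129000000000 * h) := by
  have hlog : u * logForm l ≤ 1024 * h * 65300000 :=
    mul_le_mul (by exact_mod_cast hu) (logForm_le_of_mem_exponentBox hl) (logForm_nonneg l)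
      (by positivity)
  calc _ ≤ exp ((0.6932 * 1640000000 * (0 + 1 : ℕ) + 2.86 * auxOrder 0) * h) *
        exp ((6 + 7.95 * 1640000000) * h) *
          (exp (11.61 * auxOrder 0 * h) * exp (1024 * h * 65300000)) := by
        gcongr
        · exact auxDenom_le_exp (by omega) 0 _
        · exact abs_hasseDeriv_feldmanPoly_le_exp hh hi m.1 hu
        · exact derivMonomial_le_exp hh hx hy hnh hl hm
    _ ≤ exp (129000000000 * h) := by
      rw [← exp_add, ← exp_add, ← exp_add, exp_le_exp, auxOrder_zero]
      push_cast
      linarith [(Nat.cast_nonneg h : (0 : ℝ) ≤ h)]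

theorem exists_auxVanishes_exponentBox (hh : 5 ≤ h) (hx : x ≤ n) (hy : y ≤ n)
    (hnh : n ≤ exp (8 * h)) :
    ∃ p : ℕ × ℕ × ℕ → ℕ → ℤ, (∃ l ∈ exponentBox, ∃ i < auxLength h, p l i ≠ 0) ∧
      (∀ l i, |(p l i : ℝ)| ≤ exp (25810000000 * h)) ∧
      AuxVanishes n x y (fun l => auxPoly h (auxLength h) (p l)) exponentBox (auxOrder 0) 0
        (2 * (512 * h)) := by
  have hh' : (5 : ℝ) ≤ h := by exact_mod_cast hh
  have hint : ∀ m < auxOrder 0, ∀ i < auxLength h, ∀ u : ℕ, ∃ c : ℤ,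
      auxDenom h 0 (auxOrder 0) * (hasseDeriv m (feldmanPoly h i)).eval (u : ℚ) = c := by
    intro m hm i hi u
    simpa [auxPoly_single h hi] using
      exists_int_auxDenom_mul_hasseDeriv (h := h) (by omega) (Pi.single i 1) hm.le u 0
  have hcard : 2 * (512 * h) * (auxOrder 0 * (auxOrder 0 + 1) * (auxOrder 0 + 2)) ≤
      exponentBox.card * auxLength h := by
    rw [card_exponentBox, auxOrder_zero, auxLength]
    omega
  obtain ⟨p, hp0, hp, hv⟩ := exists_auxVanishes (by norm_num [auxOrder_zero]) (by omega)
    (auxDenom_ne_zero h 0 (auxOrder 0)) (one_le_exp (by positivity)) hint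
    (fun m hm l hl i hi u hu => siegel_coeff_le_exp hh hx hy hnh (by omega) hl hi (by omega)) hcard
  refine ⟨p, hp0, fun l i => ?_, hv⟩
  calc |(p l i : ℝ)| ≤ (exponentBox.card * auxLength h * exp (129000000000 * h)) ^ (1 / 5 : ℝ) :=
        hp l i
    _ ≤ (exp 55 * exp (6 * h) * exp (129000000000 * h)) ^ (1 / 5 : ℝ) := by
      gcongr
      · exact card_exponentBox_le
      · exact auxLength_le_exp hh
    _ ≤ exp (25810000000 * h) := by
      rw [← exp_add, ← exp_add, ← exp_mul, exp_le_exp]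
      linarith

end ParameterBounds

section LowerBound

theorem auxOrder_eq_two_mul {J : ℕ} (hJ : J < 25) : auxOrder J = 2 * auxOrder (J + 1) := by
  rw [auxOrder, auxOrder, show 25 - J = 25 - (J + 1) + 1 by omega, pow_succ]
  ring

theorem two_pow_mul_auxOrder_succ (h : ℕ) {J : ℕ} (hJ : J < 25) :
    2 ^ J * (512 * h) * auxOrder (J + 1) = 841813590016 * h := by
  have hpow : 2 ^ J * 2 ^ (25 - (J + 1)) = 2 ^ 24 := by
    rw [← pow_add]
    congr 1
    omega
  rw [auxOrder]
  linear_combination 512 * 98 * h * hpow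

theorem step_cost_le {J : ℕ} (hJ : J < 25) :
    0.6932 * 1640000000 * ((J + 2 : ℕ) : ℝ) + 14.47 * auxOrder (J + 1) ≤ 29600000000 := by
  rw [auxOrder]
  interval_cases J <;> norm_num

theorem one_add_two_mul_pow_le_exp {M : ℕ} (hM : 2560 ≤ M) :
    1 + 2 * (2 * exp 1 * (23.5 + 1)) ^ M ≤ exp (4.91 * M) := by
  have hM' : (2560 : ℝ) ≤ M := by exact_mod_cast hM
  have hbase : 2 * exp 1 * (23.5 + 1) ≤ exp 4.9 := by
    have := le_exp_of_pow_le (a := 2 * 2.7182818286 * (23.5 + 1)) (p := 49) (q := 10)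
      (by norm_num) (by norm_num)
    rw [show ((49 : ℕ) : ℝ) / (10 : ℕ) = 4.9 by norm_num] at this
    linarith [exp_one_lt_d9]
  have hthree : (3 : ℝ) ≤ exp 1.28 := by
    have := le_exp_of_pow_le (a := 3) (p := 32) (q := 25) (by norm_num) (by norm_num)
    norm_num at this ⊢
    exact this
  have hpow : (2 * exp 1 * (23.5 + 1)) ^ M ≤ exp (4.9 * M) := by
    rw [mul_comm 4.9, exp_nat_mul]
    gcongr
  calc 1 + 2 * (2 * exp 1 * (23.5 + 1)) ^ M ≤ 3 * exp (4.9 * M) := by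
        linarith [one_le_exp (by positivity : 0 ≤ 4.9 * (M : ℝ))]
    _ ≤ exp 1.28 * exp (4.9 * M) := by gcongr
    _ ≤ exp (4.91 * M) := by
      rw [← exp_add, exp_le_exp]
      linarith

variable {h J : ℕ}

theorem interpolation_factor_le_exp (hh : 5 ≤ h) (hJ : J < 25) :
    ((2 ^ J * (512 * h) : ℕ) : ℝ) * (2 * (512 * h) : ℕ) *
      (1 + 2 * (2 * exp 1 * (23.5 + 1)) ^ (2 ^ J * (512 * h))) ^ (2 * auxOrder (J + 1)) +
      23.5 * (2 * (512 * h) : ℕ) ≤ exp (9000000000000 * h) := by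
  have hh' : (5 : ℝ) ≤ h := by exact_mod_cast hh
  have hMμ := two_pow_mul_auxOrder_succ h hJ
  set M : ℕ := 2 ^ J * (512 * h)
  have hM_ge : 512 * h ≤ M := Nat.le_mul_of_pos_left _ (by positivity)
  have hM_le : (M : ℝ) ≤ 2 ^ 34 * h := by
    have : M ≤ 2 ^ 25 * (512 * h) :=
      Nat.mul_le_mul_right _ (Nat.pow_le_pow_right (by norm_num) hJ.le)
    exact_mod_cast this.trans_eq (by ring)
  have hpow : (1 + 2 * (2 * exp 1 * (23.5 + 1)) ^ M) ^ (2 * auxOrder (J + 1)) ≤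
      exp (8300000000000 * h) := by
    refine (pow_le_pow_left₀ (by positivity)
      (one_add_two_mul_pow_le_exp (by omega : 2560 ≤ M)) _).trans ?_
    have hMμ' : (M : ℝ) * auxOrder (J + 1) = 841813590016 * h := by exact_mod_cast hMμ
    rw [← exp_nat_mul, exp_le_exp]
    push_cast
    linarith
  have hsmall : 23.5 * (2 * (512 * (h : ℝ))) ≤ 2 ^ 44 * (h * h) * exp (8300000000000 * h) :=
    calc 23.5 * (2 * (512 * (h : ℝ))) ≤ 2 ^ 44 * (h * h) := by nlinarith
      _ ≤ _ := le_mul_of_one_le_right (by positivity) (one_le_exp (by positivity))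
  have hh_exp : (h : ℝ) ≤ exp h := by linarith [add_one_le_exp (h : ℝ)]
  push_cast
  calc _ ≤ 2 ^ 34 * h * (2 * (512 * h)) * exp (8300000000000 * h) +
        2 ^ 44 * (h * h) * exp (8300000000000 * h) := by gcongr
    _ = 2 ^ 45 * (h * h) * exp (8300000000000 * h) := by ring
    _ ≤ exp (0.6932 * (45 : ℕ)) * (exp h * exp h) * exp (8300000000000 * h) := by
      gcongr
      exact two_pow_le_exp 45
    _ ≤ exp (9000000000000 * h) := by
      rw [← exp_add, ← exp_add, ← exp_add, exp_le_exp]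
      push_cast
      linarith

theorem one_div_pow_le_exp (k : ℕ) : (1 / (2 * (23.5 - 1)) : ℝ) ^ k ≤ exp (-(3.8 * k)) := by
  have hexp : exp 3.8 ≤ 45 := by
    refine le_of_pow_le_pow_left₀ (n := 5) (by norm_num) (by norm_num) ?_
    rw [← exp_nat_mul, show ((5 : ℕ) : ℝ) * 3.8 = (19 : ℕ) by norm_num, ← exp_one_pow]
    exact (pow_le_pow_left₀ (exp_pos _).le exp_one_lt_d9.le 19).trans (by norm_num)
  rw [exp_neg, mul_comm 3.8, exp_nat_mul, ← inv_pow, show (1 / (2 * (23.5 - 1)) : ℝ) = 45⁻¹ by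
    norm_num]
  gcongr

theorem card_mul_auxDenom_mul_le_exp (hh : 5 ≤ h) (hJ : J < 25) :
    exponentBox.card * (auxDenom h (J + 1) (auxOrder (J + 1)) *
      exp ((44014000006 + 11.61 * auxOrder (J + 1)) * h)) ≤ exp (73630000000 * h) := by
  have hh' : (5 : ℝ) ≤ h := by exact_mod_cast hh
  have hcost := step_cost_le hJ
  calc _ ≤ exp 55 *
        (exp ((0.6932 * 1640000000 * (J + 1 + 1 : ℕ) + 2.86 * auxOrder (J + 1)) * h) *
          exp ((44014000006 + 11.61 * auxOrder (J + 1)) * h)) := by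
        gcongr
        · exact card_exponentBox_le
        · exact auxDenom_le_exp (by omega) _ _
    _ ≤ exp (73630000000 * h) := by
      rw [← exp_add, ← exp_add, exp_le_exp]
      push_cast at hcost ⊢
      nlinarith

variable {n x y : ℕ} {p : ℕ × ℕ × ℕ → ℕ → ℤ}

theorem norm_auxCoeff_le_exp (hh : 5 ≤ h) (hx : x ≤ n) (hy : y ≤ n) (hnh : n ≤ exp (8 * h))
    (hp : ∀ l i, |(p l i : ℝ)| ≤ exp (25810000000 * h)) {l m : ℕ × ℕ × ℕ} (hl : l ∈ exponentBox)
    {t : ℕ} (hm : m.2.1 + m.2.2 ≤ t) {z : ℂ} (hz : ‖z‖ ≤ 23.5 * (2 * (512 * h) : ℕ)) :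
    ‖((auxCoeff n x y (auxPoly h (auxLength h) (p l)) l m).map (algebraMap ℚ ℂ)).eval z‖ ≤
      exp ((44014000006 + 11.61 * t) * h) := by
  have hexp := le_exp_of_pow_le (a := 23.5 * 1024 + 1.2) (p := 101) (q := 10) (by norm_num)
    (by norm_num)
  have hnorm := norm_hasseDeriv_auxPoly_le_exp hh (fun i _ => hp l i) m.1 (r := 23.5 * 1024)
    (c := 11.1) (by norm_num) (hexp.trans_eq (by norm_num))
    (hz.trans_eq (by push_cast; ring))
  rw [auxCoeff, ← Nat.cast_smul_eq_nsmul ℚ, Polynomial.map_smul, eval_smul, smul_eq_mul, norm_mul,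
    map_natCast, Complex.norm_natCast]
  calc _ ≤ exp (11.61 * t * h) *
        (exp (25810000000 * h) * exp ((6 + 11.1 * 1640000000) * h)) := by
        gcongr
        exact derivMonomial_le_exp hh hx hy hnh hl hm
    _ = exp ((44014000006 + 11.61 * t) * h) := by
      rw [← exp_add, ← exp_add]
      ring_nf

theorem abs_mul_linearForm_div_le_exp (hh : 5 ≤ h) (hn : n ≠ 0)
    (hΛ : |linearForm n x y| ≤ exp (-(12280000000000 * h))) {l : ℕ × ℕ × ℕ}
    (hl : l ∈ exponentBox) :
    |l.2.2 * linearForm n x y / n| ≤ exp (-(12270000000000 * h)) := by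
  have hh' : (5 : ℝ) ≤ h := by exact_mod_cast hh
  have hn1 : (1 : ℝ) ≤ n := by exact_mod_cast Nat.one_le_iff_ne_zero.2 hn
  have h₃ : (l.2.2 : ℝ) ≤ 2 ^ 25 := by exact_mod_cast (mem_exponentBox.1 hl).2.2.le
  rw [abs_div, abs_mul, Nat.abs_cast, Nat.abs_cast]
  calc _ ≤ l.2.2 * |linearForm n x y| := div_le_self (by positivity) hn1
    _ ≤ exp (0.6932 * (25 : ℕ)) * exp (-(12280000000000 * h)) := by
      gcongr
      exact h₃.trans (two_pow_le_exp 25)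
    _ ≤ _ := by
      rw [← exp_add, exp_le_exp]
      push_cast
      linarith

theorem auxDenom_mul_abs_auxSum_le_exp (hh : 5 ≤ h) (hn : n ≠ 0) (hx : x ≤ n) (hy : y ≤ n)
    (hnh : n ≤ exp (8 * h)) (hΛ : |linearForm n x y| ≤ exp (-(12280000000000 * h)))
    (hp : ∀ l i, |(p l i : ℝ)| ≤ exp (25810000000 * h)) {C : Finset (ℕ × ℕ × ℕ)}
    (hC : C ⊆ exponentBox) (hJ : J < 25)
    (hvanish : AuxVanishes n x y (fun l => auxPoly h (auxLength h) (p l)) C (auxOrder J) J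
      (2 * (512 * h))) {m : ℕ × ℕ × ℕ} (hm : m.1 + m.2.1 + m.2.2 < auxOrder (J + 1)) {t : ℚ}
    (ht : (t : ℝ) ∈ Set.Icc 0 ((2 * (512 * h) : ℕ) : ℝ)) :
    auxDenom h (J + 1) (auxOrder (J + 1)) *
      |auxSum n x y (fun l => auxPoly h (auxLength h) (p l)) C m t| ≤
        exp (-(2200000000000 * h)) := by
  have hh' : (5 : ℝ) ≤ h := by exact_mod_cast hh
  have hbound := abs_auxSum_le (m := m) (t := t) (μ := auxOrder (J + 1)) (ρ := 23.5)
    (w := 65300000) hn (by omega) hvanish (by rw [auxOrder_eq_two_mul hJ]; omega) (by norm_num)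
    (exp_pos _).le (by norm_num)
    (fun l hl z hz => norm_auxCoeff_le_exp (t := auxOrder (J + 1)) hh hx hy hnh hp (hC hl)
      (by omega) hz)
    (fun l hl => logForm_le_of_mem_exponentBox (hC hl))
    (fun l hl => abs_mul_linearForm_div_le_exp hh hn hΛ (hC hl)) (interpolation_factor_le_exp hh hJ)
    (by rw [← exp_add]; exact exp_le_one_iff.2 (by linarith)) ht
  rw [two_pow_mul_auxOrder_succ h hJ] at hbound
  set B := exp ((44014000006 + 11.61 * auxOrder (J + 1)) * h)
  refine (mul_le_mul_of_nonneg_left hbound (Nat.cast_nonneg _)).trans ?_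
  rw [← mul_assoc, mul_left_comm (auxDenom h (J + 1) (auxOrder (J + 1)) : ℝ)]
  calc
    _ ≤ exp (73630000000 * h) * (exp (65300000 * (2 * (512 * h) : ℕ) * (1 + 23.5) / 2 + 1) *
        exp (-(3.8 * (841813590016 * h : ℕ))) + exp (65300000 * (2 * (512 * h) : ℕ)) *
          (2 * (exp (-(12270000000000 * h)) * exp (9000000000000 * h)))) := by
      gcongr
      · exact (by gcongr : _ ≤ _).trans (card_mul_auxDenom_mul_le_exp hh hJ)
      · exact one_div_pow_le_exp _
    _ = exp (73630000000 * h + (65300000 * (2 * (512 * h) : ℕ) * (1 + 23.5) / 2 + 1 +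
        -(3.8 * (841813590016 * h : ℕ)))) + 2 * exp (73630000000 * h +
          (65300000 * (2 * (512 * h) : ℕ) + (-(12270000000000 * h) + 9000000000000 * h))) := by
      simp only [exp_add]
      ring
    _ ≤ exp (-(2200000000000 * h) + -2) + 2 * exp (-(2200000000000 * h) + -2) := by
      refine add_le_add (exp_le_exp.2 ?_) (mul_le_mul_of_nonneg_left (exp_le_exp.2 ?_)
        zero_le_two) <;> push_cast <;> linarith
    _ ≤ exp (-(2200000000000 * h)) := by
      have : 3 ≤ exp 2 := by linarith [add_one_le_exp (2 : ℝ)]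
      rw [exp_add, exp_neg 2]
      have : (exp 2)⁻¹ ≤ 3⁻¹ := by gcongr
      nlinarith [exp_pos (-(2200000000000 * (h : ℝ)))]

theorem sum_auxDenom_mul_abs_auxCoeff_le_exp (hh : 5 ≤ h) (hx : x ≤ n) (hy : y ≤ n)
    (hnh : n ≤ exp (8 * h)) (hp : ∀ l i, |(p l i : ℝ)| ≤ exp (25810000000 * h))
    {C : Finset (ℕ × ℕ × ℕ)} (hC : C ⊆ exponentBox) (hJ : J < 25) {m : ℕ × ℕ × ℕ}
    (hm : m.2.1 + m.2.2 ≤ auxOrder (J + 1)) {t : ℚ}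
    (ht : (t : ℝ) ∈ Set.Icc 0 ((2 * (512 * h) : ℕ) : ℝ)) :
    ∑ l ∈ C, auxDenom h (J + 1) (auxOrder (J + 1)) *
      |(((auxCoeff n x y (auxPoly h (auxLength h) (p l)) l m).eval t : ℚ) : ℝ)| *
        exp (t * logForm l) ≤ exp (140500000000 * h) := by
  set B := exp ((44014000006 + 11.61 * auxOrder (J + 1)) * h)
  have hterm : ∀ l ∈ C, auxDenom h (J + 1) (auxOrder (J + 1)) *
      |(((auxCoeff n x y (auxPoly h (auxLength h) (p l)) l m).eval t : ℚ) : ℝ)| *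
        exp (t * logForm l) ≤ auxDenom h (J + 1) (auxOrder (J + 1)) * B *
          exp ((2 * (512 * h) : ℕ) * 65300000) := by
    intro l hl
    have ht_norm : ‖(t : ℂ)‖ ≤ 23.5 * (2 * (512 * h) : ℕ) := by
      rw [← Complex.ofReal_ratCast, Complex.norm_of_nonneg ht.1]
      linarith [ht.2, (Nat.cast_nonneg (2 * (512 * h)) : (0 : ℝ) ≤ _)]
    have hcoeff := norm_auxCoeff_le_exp hh hx hy hnh hp (hC hl) hm ht_norm
    rw [eval_map_algebraMap_ratCast, Complex.norm_real, Real.norm_eq_abs] at hcoeff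
    gcongr
    exacts [logForm_nonneg l, ht.2, logForm_le_of_mem_exponentBox (hC hl)]
  calc _ ≤ C.card * (auxDenom h (J + 1) (auxOrder (J + 1)) * B *
        exp ((2 * (512 * h) : ℕ) * 65300000)) := by
        simpa only [nsmul_eq_mul] using Finset.sum_le_card_nsmul _ _ _ hterm
    _ ≤ exponentBox.card * (auxDenom h (J + 1) (auxOrder (J + 1)) * B) *
        exp ((2 * (512 * h) : ℕ) * 65300000) := by
      rw [← mul_assoc]
      gcongr
    _ ≤ exp (73630000000 * h) * exp ((2 * (512 * h) : ℕ) * 65300000) := by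
      gcongr
      exact card_mul_auxDenom_mul_le_exp hh hJ
    _ ≤ exp (140500000000 * h) := by
      rw [← exp_add, exp_le_exp]
      push_cast
      linarith [(Nat.cast_nonneg h : (0 : ℝ) ≤ h)]

theorem AuxVanishes.succ_residueClass (hh : 5 ≤ h) (hn : n ≠ 0) (hx : x ≤ n) (hy : y ≤ n)
    (hnh : n ≤ exp (8 * h)) (hΛ : |linearForm n x y| ≤ exp (-(12280000000000 * h)))
    (hp : ∀ l i, |(p l i : ℝ)| ≤ exp (25810000000 * h)) {l₀ : ℕ × ℕ × ℕ} (hJ : J < 25)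
    (hvanish : AuxVanishes n x y (fun l => auxPoly h (auxLength h) (p l))
      (residueClass exponentBox l₀ J) (auxOrder J) J (2 * (512 * h))) :
    AuxVanishes n x y (fun l => auxPoly h (auxLength h) (p l))
      (residueClass exponentBox l₀ (J + 1)) (auxOrder (J + 1)) (J + 1) (2 * (512 * h)) := by
  intro m hm u hu hlt
  have hC := residueClass_subset exponentBox l₀ J
  have hh' : (5 : ℝ) ≤ h := by exact_mod_cast hh
  have ht : ((u / 2 ^ (J + 1) : ℚ) : ℝ) ∈ Set.Icc 0 ((2 * (512 * h) : ℕ) : ℝ) := by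
    have hlt : (u : ℝ) ≤ 2 ^ (J + 1) * (2 * (512 * h) : ℕ) := by exact_mod_cast hlt.le
    push_cast at hlt ⊢
    exact ⟨by positivity, (div_le_iff₀' (by positivity)).2 hlt⟩
  refine auxSum_residueClass_succ_eq_zero hu (auxDenom_ne_zero h (J + 1) (auxOrder (J + 1)))
    (fun l _ => exists_int_auxDenom_mul_hasseDeriv (by omega) (p l) (by omega) u (J + 1))
    (one_le_exp (by positivity : 0 ≤ 140500000000 * (h : ℝ)))
    (sum_auxDenom_mul_abs_auxCoeff_le_exp hh hx hy hnh hp hC hJ (by omega) ht) ?_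
  calc _ ≤ exp (-(2200000000000 * h)) * exp (140500000000 * h) ^ 15 := by
        gcongr
        exact auxDenom_mul_abs_auxSum_le_exp hh hn hx hy hnh hΛ hp hC hJ hvanish hm ht
    _ < 1 := by
      rw [← exp_nat_mul, ← exp_add, exp_lt_one_iff]
      push_cast
      linarith

theorem exp_lt_abs_linearForm (hh : 5 ≤ h) (hn : n ≠ 0) (hx : x ≤ n) (hy : y ≤ n)
    (hnh : n ≤ exp (8 * h)) : exp (-(12280000000000 * h)) < |linearForm n x y| := by
  by_contra! hΛ
  obtain ⟨p, ⟨l₀, hl₀, i, hi, hpi⟩, hp, hvanish⟩ := exists_auxVanishes_exponentBox hh hx hy hnh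
  have hlast : AuxVanishes n x y (fun l => auxPoly h (auxLength h) (p l))
      (residueClass exponentBox l₀ 25) (auxOrder 25) 25 (2 * (512 * h)) :=
    Nat.le_induction (m := 0) (P := fun J _ => J ≤ 25 → AuxVanishes n x y
        (fun l => auxPoly h (auxLength h) (p l)) (residueClass exponentBox l₀ J) (auxOrder J) J
        (2 * (512 * h)))
      (fun _ => by rwa [residueClass_zero])
      (fun J _ ih hJ => (ih (by omega)).succ_residueClass hh hn hx hy hnh hΛ hp hJ)
      25 (Nat.zero_le _) le_rfl
  rw [residueClass_exponentBox hl₀] at hlast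
  have hroot (v : Fin (auxLength h)) :
      (auxPoly h (auxLength h) (p l₀)).eval (((2 * v + 1 : ℕ) : ℚ) / 2 ^ 25) = 0 := by
    have hv : (v : ℕ) < 1640000000 * h := v.2
    have hsum := hlast (0, 0, 0) (by norm_num [auxOrder]) (2 * v + 1) ⟨v, rfl⟩
      (by omega)
    simpa [auxSum, auxCoeff, derivMonomial, exp_ne_zero] using hsum
  refine auxPoly_ne_zero h hi hpi (eq_zero_of_degree_lt_of_eval_index_eq_zero
    Finset.univ (v := fun v : Fin (auxLength h) => ((2 * v + 1 : ℕ) : ℚ) / 2 ^ 25) ?_ ?_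
    fun v _ => hroot v)
  · intro v _ w _ hvw
    have hvw := (div_left_inj' (by norm_num)).1 hvw
    norm_cast at hvw
    exact Fin.ext (by omega)
  · rw [Finset.card_univ, Fintype.card_fin]
    exact degree_auxPoly_lt h _ _

end LowerBound

section Lucas

theorem cast_lucas (n : ℕ) : (lucas n : ℝ) = φ ^ n + ψ ^ n := by
  induction n using Nat.twoStepInduction with
  | zero => norm_num [lucas]
  | one => simp [lucas, goldenRatio_add_goldenConj]
  | more n ih₀ ih₁ =>
    rw [lucas, Int.cast_add, ih₀, ih₁, pow_add φ n 2, pow_add ψ n 2, goldenRatio_sq,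
      goldenConj_sq]
    ring

theorem abs_goldenConj_pow_le_one (n : ℕ) : |ψ ^ n| ≤ 1 := by
  rw [abs_pow]
  exact pow_le_one₀ (abs_nonneg _)
    (abs_le.2 ⟨neg_one_lt_goldenConj.le, goldenConj_neg.le.trans zero_le_one⟩)

theorem abs_log_le_two_mul {t : ℝ} (ht : |t - 1| ≤ 1 / 2) : |log t| ≤ 2 * |t - 1| := by
  have ht_half : 1 / 2 ≤ t := by linarith [neg_le_of_abs_le ht]
  have ht_pos : 0 < t := by linarith
  refine abs_le.2 ⟨?_, (log_le_sub_one_of_pos ht_pos).trans (by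
    linarith [le_abs_self (t - 1), abs_nonneg (t - 1)])⟩
  calc
    -(2 * |t - 1|) ≤ (t - 1) / t := by
        rw [le_div_iff₀ ht_pos]
        nlinarith [neg_abs_le (t - 1), abs_nonneg (t - 1)]
    _ = 1 - t⁻¹ := by field_simp
    _ ≤ log t := one_sub_inv_le_log_of_pos ht_pos

theorem lt_log_goldenRatio : 0.48 < log φ := by
  rw [lt_log_iff_exp_lt goldenRatio_pos]
  have hexp : exp 0.48 ≤ 1.618 := by
    refine le_of_pow_le_pow_left₀ (n := 25) (by norm_num) (by norm_num) ?_
    rw [← exp_nat_mul, show ((25 : ℕ) : ℝ) * 0.48 = (12 : ℕ) by norm_num, ← exp_one_pow]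
    exact (pow_le_pow_left₀ (exp_pos _).le exp_one_lt_d9.le 12).trans (by norm_num)
  have hsqrt : 2.2360 < √5 := by
    rw [lt_sqrt (by norm_num)]
    norm_num
  rw [goldenRatio]
  linarith

variable {n n₁ x y : ℕ}

theorem goldenRatio_pow_div_pow_le_exp (h : n₁ ≤ n) :
    φ ^ n₁ / φ ^ n ≤ exp (-(0.48 * ((n : ℝ) - n₁))) := by
  have h' : (n₁ : ℝ) ≤ n := by exact_mod_cast h
  rw [← exp_log goldenRatio_pos, ← exp_nat_mul, ← exp_nat_mul, ← exp_sub, exp_le_exp]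
  nlinarith [lt_log_goldenRatio]

theorem abs_div_goldenRatio_pow_sub_one_le (hn : n₁ ≤ n)
    (h : |lucas n - 2 ^ x * 3 ^ y| ≤ lucas n₁) :
    |2 ^ x * 3 ^ y / φ ^ n - 1| ≤ 3 * exp (-(0.48 * ((n : ℝ) - n₁))) := by
  have h' : |(lucas n : ℝ) - 2 ^ x * 3 ^ y| ≤ lucas n₁ := by exact_mod_cast h
  rw [cast_lucas, cast_lucas] at h'
  have hpow : 0 < φ ^ n := pow_pos goldenRatio_pos n
  calc _ = |2 ^ x * 3 ^ y - φ ^ n| / φ ^ n := by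
        rw [div_sub_one hpow.ne', abs_div, abs_of_pos hpow]
    _ ≤ 3 * φ ^ n₁ / φ ^ n := by
      have hone : 1 ≤ φ ^ n₁ := one_le_pow₀ one_lt_goldenRatio.le
      have hψ := abs_le.1 (abs_goldenConj_pow_le_one n)
      have hψ₁ := abs_le.1 (abs_goldenConj_pow_le_one n₁)
      gcongr
      exact abs_le.2 ⟨by linarith [(abs_le.1 h').2], by linarith [(abs_le.1 h').1]⟩
    _ ≤ _ := by
      rw [mul_div_assoc]
      gcongr
      exact goldenRatio_pow_div_pow_le_exp hn

theorem abs_div_goldenRatio_pow_sub_one_le_half (hn : n₁ + 4 ≤ n)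
    (h : |lucas n - 2 ^ x * 3 ^ y| ≤ lucas n₁) : |2 ^ x * 3 ^ y / φ ^ n - 1| ≤ 1 / 2 := by
  refine (abs_div_goldenRatio_pow_sub_one_le (by omega) h).trans ?_
  have hn' : (n₁ : ℝ) + 4 ≤ n := by exact_mod_cast hn
  have hsix := le_exp_of_pow_le (a := 6) (p := 48) (q := 25) (by norm_num) (by norm_num)
  calc _ ≤ 3 * exp (-((48 : ℕ) / (25 : ℕ))) := by
        gcongr
        norm_num
        linarith
    _ ≤ 3 * 6⁻¹ := by
      rw [exp_neg]
      gcongr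
    _ = 1 / 2 := by norm_num

theorem le_and_le_of_abs_lucas_sub_le (hn : n₁ + 4 ≤ n)
    (h : |lucas n - 2 ^ x * 3 ^ y| ≤ lucas n₁) : x ≤ n ∧ y ≤ n := by
  have hlt : 2 ^ x * 3 ^ y < 2 ^ (n + 1) := by
    have hφ := pow_le_pow_left₀ goldenRatio_pos.le goldenRatio_lt_two.le n
    have hquot : 2 ^ x * 3 ^ y / φ ^ n ≤ 3 / 2 := by
      linarith [le_of_abs_le (abs_div_goldenRatio_pow_sub_one_le_half hn h)]
    have hle := (div_le_iff₀ (pow_pos goldenRatio_pos n)).1 hquot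
    have : (2 ^ x * 3 ^ y : ℝ) < 2 ^ (n + 1) := by
      rw [pow_succ (2 : ℝ) n]
      linarith [pow_pos (two_pos (α := ℝ)) n]
    exact_mod_cast this
  have hx : 2 ^ x < 2 ^ (n + 1) := (Nat.le_mul_of_pos_right _ (by positivity)).trans_lt hlt
  have hy : 2 ^ y < 2 ^ (n + 1) := ((Nat.pow_le_pow_left (by norm_num) y).trans
    (Nat.le_mul_of_pos_left _ (by positivity))).trans_lt hlt
  exact ⟨Nat.lt_succ_iff.1 ((Nat.pow_lt_pow_iff_right one_lt_two).1 hx),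
    Nat.lt_succ_iff.1 ((Nat.pow_lt_pow_iff_right one_lt_two).1 hy)⟩

theorem abs_linearForm_le (hn : n₁ + 4 ≤ n) (h : |lucas n - 2 ^ x * 3 ^ y| ≤ lucas n₁) :
    |linearForm n x y| ≤ 6 * exp (-(0.48 * ((n : ℝ) - n₁))) := by
  have hΛ : linearForm n x y = -log (2 ^ x * 3 ^ y / φ ^ n) := by
    rw [linearForm, log_div (by positivity) (pow_pos goldenRatio_pos n).ne',
      log_mul (by positivity) (by positivity), log_pow, log_pow, log_pow]
    ring
  rw [hΛ, abs_neg]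
  linarith [abs_log_le_two_mul (abs_div_goldenRatio_pow_sub_one_le_half hn h),
    abs_div_goldenRatio_pow_sub_one_le (n₁ := n₁) (by omega) h]

/- A lower bound `m` for `log n` improves itself: if `exp b < 4 * 10 ^ 12 * m`, then `exp b < n`. -/
theorem lt_log_of_mul_log_le (hn : 1 < n) (h : 4 * 10 ^ 12 * log n ≤ n) : 32 < log n := by
  have hn_pos : (0 : ℝ) < n := by exact_mod_cast (by omega : 0 < n)
  have improve {m : ℝ} {b : ℕ} (hm : m ≤ log n) (hb : 2.7182818286 ^ b < 4 * 10 ^ 12 * m) :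
      (b : ℝ) < log n := by
    rw [lt_log_iff_exp_lt hn_pos, ← exp_one_pow]
    refine (pow_le_pow_left₀ (exp_pos _).le exp_one_lt_d9.le b).trans_lt (hb.trans_le ?_)
    linarith
  have hlog_two : 0.69 ≤ log n := by
    have : log 2 ≤ log n := log_le_log two_pos (by exact_mod_cast hn)
    linarith [log_two_gt_d9]
  have hlog : ((28 : ℕ) : ℝ) < log n := improve hlog_two (by norm_num)
  exact_mod_cast improve (b := 32) hlog.le (by norm_num)

end Lucas

theorem pos_c_gap_n_bound_general {n n₁ x y : ℕ} (hn : 1 < n)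
    (h : |lucas n - 2 ^ x * 3 ^ y| ≤ lucas n₁) : (n : ℝ) - n₁ < 4 * 10 ^ 12 * log n := by
  by_contra! hgap
  have hlog := lt_log_of_mul_log_le hn (hgap.trans (sub_le_self _ n₁.cast_nonneg))
  have hn₁ : n₁ + 4 ≤ n := by
    have : (n₁ : ℝ) + 4 ≤ n := by linarith
    exact_mod_cast this
  obtain ⟨hx, hy⟩ := le_and_le_of_abs_lucas_sub_le hn₁ h
  set k : ℕ := ⌈log n / 8⌉₊
  have hk_ge : log n / 8 ≤ k := Nat.le_ceil _
  have hk_lt : (k : ℝ) < log n / 8 + 1 := Nat.ceil_lt_add_one (by linarith)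
  have hk : 4 < k := by
    have : (4 : ℝ) < k := by linarith
    exact_mod_cast this
  have hnk : n ≤ exp (8 * k) :=
    (log_le_iff_le_exp (by exact_mod_cast (by omega : 0 < n))).1 (by linarith)
  have hlower := exp_lt_abs_linearForm hk (by omega) hx hy hnk
  refine hlower.not_ge ((abs_linearForm_le hn₁ h).trans ?_)
  calc _ ≤ exp 5 * exp (-(0.48 * ((n : ℝ) - n₁))) := by
        gcongr
        linarith [add_one_le_exp (5 : ℝ)]
    _ ≤ _ := by
      rw [← exp_add, exp_le_exp]
      linarith

theorem pos_c_gap_n_bound (c : ℤ) (hc : 0 < c) (n n₁ x x₁ y y₁ : ℕ)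
    (h1 : c = lucas n - 2 ^ x * 3 ^ y) (h2 : c = lucas n₁ - 2 ^ x₁ * 3 ^ y₁)
    (hnn : n₁ < n) (hn : 1500 < n) :
    (n : ℝ) - n₁ < 4 * 10 ^ 12 * Real.log n := by
  refine pos_c_gap_n_bound_general (x := x) (y := y) (by omega) ?_
  rw [← h1, abs_of_pos hc, h2]
  exact sub_le_self _ (by positivity)
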